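/- arXiv:0902.4270 — 2 statements merged into one kernel-verified Lean document; each statement's English description precedes it below -/
import Mathlib

section
/- Assume char(F) = 3. Let 1 ≤ s ≤ 4, let x_1,…,x_{8−2s} be pairwise different letters among x_1,…,x_d (so d ≥ 8−2s), let a_1,…,a_{s−1}, v, w ∈ M be words, and let u_1,…,u_{s+1} ∈ M_1 satisfy deg_{x_i}(u_1 u_2 ⋯ u_{s+1}) = 3 for every 1 ≤ i ≤ 8−2s. Then the product of the 2s+1 elements vw − wv, ā_1, …, ā_{s−1}, u_1, …, u_{s+1} taken in any order equals zero in A_{3,d}, where ā = a − a^T. -/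
open FreeAlgebra MulOpposite

/-- The alphabet: `(k, false)` is the letter `x_{k+1}`, `(k, true)` is `x_{k+1}ᵀ`. -/
abbrev Ltr (d : ℕ) := Fin d × Bool

/-- The free (unital) associative algebra on the `2d` letters.  The free non-unital
algebra `M_F` sits inside it as the span of the nonempty words. -/
abbrev FA (F : Type) [Field F] (d : ℕ) := FreeAlgebra F (Ltr d)

variable (F : Type) [Field F] (d : ℕ)

/-- The word in the free algebra corresponding to a list of letters
(the empty list gives `1`, the unit). -/
def wordOf (l : List (Ltr d)) : FA F d := (l.map (FreeAlgebra.ι F)).prod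

/-- The transpose: the linear anti-automorphism with `x ↦ xᵀ`, `xᵀ ↦ x`. -/
def tp (a : FA F d) : FA F d :=
  ((FreeAlgebra.lift F fun p : Ltr d => op (FreeAlgebra.ι F (p.1, !p.2))) a).unop

/-- `ā = a - aᵀ`. -/
def bar (a : FA F d) : FA F d := a - tp F d a

/-- `T(a,b,c) = a b̄ c̄ + b̄ aᵀ c̄ + b̄ c̄ a`. -/
def Trel (a b c : FA F d) : FA F d :=
  a * bar F d b * bar F d c + bar F d b * tp F d a * bar F d c + bar F d b * bar F d c * a

/-- The copy of the free non-unital algebra `M_F`, i.e. the span of the nonempty words. -/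
def MFsub : Submodule F (FA F d) :=
  Submodule.span F {w | ∃ l : List (Ltr d), l ≠ [] ∧ w = wordOf F d l}

/-- The two-sided ideal such that `A_{3,d} = M_F / (idealA ∩ M_F)`: it is generated by
`a³` for `a ∈ M_F` together with `T(a,b,c)` for `a, b, c ∈ M_F`.  (Since all generators lie in
`M_F`, its intersection with `M_F` is exactly the two-sided ideal of the non-unital algebra
`M_F` generated by these elements; in fact it is contained in `M_F`.)
An element `u ∈ M_F` is zero in `A_{3,d}` iff `u ∈ idealA F d`. -/
def idealA : TwoSidedIdeal (FA F d) :=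
  TwoSidedIdeal.span
    ({x | ∃ a ∈ MFsub F d, x = a ^ 3} ∪
     {x | ∃ a ∈ MFsub F d, ∃ b ∈ MFsub F d, ∃ c ∈ MFsub F d, x = Trel F d a b c})


structure Ctx (Q : Type) [Ring Q] (τ : Q → Q) : Prop where
  add : ∀ a b, τ (a + b) = τ a + τ b
  mul : ∀ a b, τ (a * b) = τ b * τ a
  inv : ∀ a, τ (τ a) = a
  three : ∀ a : Q, a + a + a = 0
  N : ∀ a b c : Q, a*b*c + a*c*b + b*a*c + b*c*a + c*a*b + c*b*a = 0
  T : ∀ a b c : Q, τ b = -b → τ c = -c → a*b*c + b*τ a*c + b*c*a = 0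

namespace Ctx
variable {Q : Type} [Ring Q] {τ : Q → Q} (h : Ctx Q τ)
include h

theorem zero : τ 0 = 0 := by
  have := h.add 0 0
  simpa using this

theorem neg (a : Q) : τ (-a) = - τ a := by
  have := h.add a (-a)
  rw [add_neg_cancel, h.zero] at this
  exact (neg_eq_of_add_eq_zero_right this.symm).symm

theorem sub (a b : Q) : τ (a - b) = τ a - τ b := by
  rw [sub_eq_add_neg, h.add, h.neg, sub_eq_add_neg]

theorem self_neg {a : Q} (ha : a = -a) : a = 0 := by
  have := h.three a
  have h2 : a + a = 0 := by nth_rewrite 2 [ha]; simp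
  rwa [h2, zero_add] at this

theorem decomp (v : Q) : ∃ s p, τ s = s ∧ τ p = -p ∧ v = s + p := by
  refine ⟨-(v + τ v), -(v - τ v), ?_, ?_, ?_⟩
  · rw [h.neg, h.add, h.inv, add_comm]
  · rw [h.neg, h.sub, h.inv]; abel
  · have := h.three v
    linear_combination (norm := noncomm_ring) this

theorem skAct {b : Q} (hb : τ b = -b) (y : Q) : τ (y*b + b*τ y) = -(y*b + b*τ y) := by
  rw [h.add, h.mul, h.mul, h.inv, hb]; noncomm_ring

theorem skL {b : Q} (hb : τ b = -b) (y : Q) : ∃ c, τ c = -c ∧ y * b = c - b * τ y :=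
  ⟨_, h.skAct hb y, by abel⟩

theorem skR {b : Q} (hb : τ b = -b) (y : Q) : ∃ c, τ c = -c ∧ b * y = c - τ y * b :=
  ⟨_, h.skAct hb (τ y), by rw [h.inv]; abel⟩

theorem comm_tau (v w : Q) : τ (v*w - w*v) = τ w * τ v - τ v * τ w := by
  rw [h.sub, h.mul, h.mul]

theorem L1 {b c e : Q} (hb : τ b = -b) (hc : τ c = -c) (he : τ e = -e) (w : Q) :
    w*b*c*e = b*c*e*τ w := by
  have h1 := h.T (τ w) c e hc he
  have h2 := h.T w b c hb hc
  rw [h.inv] at h1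
  linear_combination (norm := noncomm_ring) h2 * e - b * h1

theorem L2 {b c e : Q} (hb : τ b = -b) (hc : τ c = -c) (he : τ e = -e) (v w : Q) :
    b*c*e*v*w = b*c*e*w*v := by
  have h1 := h.L1 hb hc he (τ v)
  have h2 := h.L1 hb hc he (τ w)
  have h3 := h.L1 hb hc he (τ v * τ w)
  simp only [h.mul, h.inv] at h1 h2 h3
  linear_combination (norm := noncomm_ring) h3 - τ v * h2 - h1 * w

theorem L3 {b c e : Q} (hb : τ b = -b) (hc : τ c = -c) (he : τ e = -e) (u v : Q) :
    b*c*e*u*v = b*c*e*v*u := h.L2 hb hc he u v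

/-- moving elements around three skews with gaps -/
theorem L4 {b c e : Q} (hb : τ b = -b) (hc : τ c = -c) (he : τ e = -e) (U u v : Q) :
    U*(b*u*c*v*e) = b*u*c*v*e*τ U := by
  obtain ⟨c', hc', ec⟩ := h.skL hc u
  obtain ⟨e', he', ee⟩ := h.skL he v
  obtain ⟨e2, he2, ee2⟩ := h.skL he (τ u * v)
  have key : b*u*c*v*e = b*c'*e' - b*c'*e*τ v - b*c*e2 + b*c*e*τ (τ u * v) := by
    linear_combination (norm := noncomm_ring) b * ec * v * e + b * c' * ee - b * c * ee2
  rw [key]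
  have a1 := h.L1 hb hc' he' U
  have a2 := h.L1 hb hc' he U
  have a3 := h.L1 hb hc he2 U
  have a4 := h.L1 hb hc he U
  have b2 := h.L2 hb hc' he (τ U) (τ v)
  have b4 := h.L2 hb hc he (τ U) (τ (τ u * v))
  linear_combination (norm := noncomm_ring) a1 - a2 * τ v - a3 + a4 * τ (τ u * v) - b2 + b4

theorem K4 {b c e : Q} (hb : τ b = -b) (hc : τ c = -c) (he : τ e = -e) (u v z x y : Q) :
    b*u*c*v*e*z*(x*y-y*x) = 0 := by
  have a1 := h.L4 hb hc he (τ x) u v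
  have a2 := h.L4 hb hc he (τ y) u v
  have a3 := h.L4 hb hc he (τ x * τ y) u v
  have a4 := h.L4 hb hc he (τ z) u v
  have a5 := h.L4 hb hc he (τ z) u v
  simp only [h.mul, h.inv] at a1 a2 a3 a4 a5
  have k : b*u*c*v*e*(x*y-y*x) = 0 := by
    linear_combination (norm := noncomm_ring) a2 * 0 - a1 * y - τ x * a2 + a3
  rw [← a4, mul_assoc, k, mul_zero]

theorem K4L {b c e : Q} (hb : τ b = -b) (hc : τ c = -c) (he : τ e = -e) (u v z x y : Q) :
    (x*y-y*x)*z*(b*u*c*v*e) = 0 := by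
  have := h.L4 hb hc he ((x*y-y*x)*z) u v
  rw [this, h.mul, h.comm_tau, ← mul_assoc]
  exact h.K4 hb hc he u v (τ z) (τ y) (τ x)

theorem swap13 {p q r : Q} (hp : τ p = -p) (hq : τ q = -q) (hr : τ r = -r) :
    p*q*r = -(r*q*p) := by
  have h1 := h.T p q r hq hr
  have h2 := h.T q p r hp hr
  have h3 := h.T q r p hr hp
  have h4 := h.T p r q hr hq
  have h5 := h.T r p q hp hq
  rw [hp] at h1 h4; rw [hq] at h2 h3; rw [hr] at h5
  linear_combination (norm := noncomm_ring) h5 + h4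

theorem mid_skew {b c e C : Q} (hb : τ b = -b) (hc : τ c = -c) (he : τ e = -e)
    (hC : τ C = -C) (v w : Q) (hvw : C = v*w-w*v) : b*C*c*e = 0 := by
  have h1 := h.T C c e hc he
  have h2 := h.T C b c hb hc
  rw [hC] at h1 h2
  have k1 : b*c*e*C = 0 := by
    have := h.K4 hb hc he 1 1 1 v w
    rw [← hvw] at this; simpa using this
  have k2 : C*c*b*e = 0 := by
    have := h.K4L hc hb he 1 1 1 v w
    rw [← hvw] at this; simpa [mul_assoc] using this
  have k3 := h.swap13 hb hc hC
  linear_combination (norm := noncomm_ring) b * h1 - k1 + k3 * e - k2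

theorem mid_mixed {b c e p s : Q} (hb : τ b = -b) (hc : τ c = -c) (he : τ e = -e)
    (hp : τ p = -p) (hs : τ s = s) : b*(p*s-s*p)*c*e = 0 := by
  have t2 := h.T s p c hp hc
  have t2' := h.T s p b hp hb
  have t1' := h.T s c p hc hp
  rw [hs] at t2 t2' t1'
  have l1 := h.L1 hb hp hc s
  have l1' := h.L1 hc hp hb s
  have l2 := h.L1 hp hb he s
  rw [hs] at l1 l1' l2
  have hbs := h.skAct hb s
  rw [hs] at hbs
  have w1 := h.swap13 hbs hp hc
  have w2 := h.swap13 hb hp hc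
  have l3 := h.L1 hp hc he s
  rw [hs] at l3
  have w3 := h.swap13 hb hp hc
  have w4 := h.swap13 hc hp hb
  -- a1 = b s p c e, a2 = b p s c e, a1' = c s p b e , a2' = c p s b e
  have e1 : b*s*p*c*e + b*p*s*c*e + b*p*c*s*e = 0 := by
    linear_combination (norm := noncomm_ring) b * t2 * e
  have e1' : c*s*p*b*e + c*p*s*b*e + c*p*b*s*e = 0 := by
    linear_combination (norm := noncomm_ring) c * t2' * e
  have e2 : b*s*p*c*e = - (c*p*s*b*e) := by
    linear_combination (norm := noncomm_ring) w1 * e - l1 * e - w2 * s * e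
  have e3 : b*s*p*c*e = b*p*c*e*s := by
    linear_combination (norm := noncomm_ring) b * l3
  have e3' : c*s*p*b*e = c*p*b*e*s := by
    linear_combination (norm := noncomm_ring) c * l2
  linear_combination (norm := noncomm_ring) e1 + e1' - e2 - w2*s*e - e3 - e3' - w2*e*s

theorem mid {b c e : Q} (hb : τ b = -b) (hc : τ c = -c) (he : τ e = -e) (v w : Q) :
    b*(v*w-w*v)*c*e = 0 := by
  obtain ⟨s, p, hs, hp, rfl⟩ := h.decomp v
  obtain ⟨t, q, ht, hq, rfl⟩ := h.decomp w
  have h1 := h.mid_skew hb hc he (C := s*t-t*s)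
    (by rw [h.comm_tau, hs, ht]; noncomm_ring) s t rfl
  have h2 := h.mid_skew hb hc he (C := p*q-q*p)
    (by rw [h.comm_tau, hp, hq]; noncomm_ring) p q rfl
  have h3 := h.mid_mixed hb hc he hp ht
  have h4 := h.mid_mixed hb hc he hq hs
  linear_combination (norm := noncomm_ring) h1 + h2 + h3 - h4

/-- s = 4, commutator in second position -/
theorem Z3b {b c e : Q} (hb : τ b = -b) (hc : τ c = -c) (he : τ e = -e) (v w x y z : Q) :
    b*x*(v*w-w*v)*y*c*z*e = 0 := by
  have k1 : ∀ b c e : Q, τ b = -b → τ c = -c → τ e = -e → ∀ z, b*(v*w-w*v)*c*z*e = 0 := by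
    intro b c e hb hc he z
    obtain ⟨e', he', ee⟩ := h.skL he z
    linear_combination (norm := noncomm_ring) b*(v*w-w*v)*c*ee + h.mid hb hc he' v w
      - h.mid hb hc he v w * τ z
  have k2 : ∀ b c e : Q, τ b = -b → τ c = -c → τ e = -e → ∀ y z, b*(v*w-w*v)*y*c*z*e = 0 := by
    intro b c e hb hc he y z
    obtain ⟨c', hc', ee⟩ := h.skL hc y
    linear_combination (norm := noncomm_ring) b*(v*w-w*v)*ee*z*e + k1 b c' e hb hc' he z
      - k1 b c e hb hc he (τ y * z)
  obtain ⟨b', hb', ee⟩ := h.skR hb x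
  linear_combination (norm := noncomm_ring) ee*(v*w-w*v)*y*c*z*e + k2 b' c e hb' hc he y z
      - τ x * k2 b c e hb hc he y z

theorem Z3c {b c e : Q} (hb : τ b = -b) (hc : τ c = -c) (he : τ e = -e) (v w x y z : Q) :
    b*x*c*y*(v*w-w*v)*z*e = 0 := by
  have := congrArg τ (h.Z3b he hc hb (τ w) (τ v) (τ z) (τ y) (τ x))
  simp only [h.mul, h.comm_tau, hb, hc, he, h.inv, h.zero] at this
  linear_combination (norm := noncomm_ring) -this

/-- moving across `C l b c` -/
theorem LC {b c : Q} (hb : τ b = -b) (hc : τ c = -c) (v w U u x : Q) :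
    U*((v*w-w*v)*u*b*x*c) = (v*w-w*v)*u*b*x*c*τ U := by
  obtain ⟨s, p, hs, hp, rfl⟩ := h.decomp v
  obtain ⟨t, q, ht, hq, rfl⟩ := h.decomp w
  have key : ∀ p s : Q, τ p = -p → τ s = s →
      U*((p*s-s*p)*u*b*x*c) = (p*s-s*p)*u*b*x*c*τ U := by
    intro p s hp hs
    have h1 := h.L4 hp hb hc U (s*u) x
    have h2 := h.L4 hp hb hc (U*s) u x
    have h3 := h.L4 hp hb hc s u x
    rw [h.mul, hs] at h2
    rw [hs] at h3
    linear_combination (norm := noncomm_ring) h1 - h2 + h3 * τ U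
  have h1 := h.L4 (b := s*t-t*s) (by rw [h.comm_tau, hs, ht]; noncomm_ring) hb hc U u x
  have h2 := h.L4 (b := p*q-q*p) (by rw [h.comm_tau, hp, hq]; noncomm_ring) hb hc U u x
  linear_combination (norm := noncomm_ring) h1 + h2 + key p t hp ht - key q s hq hs

theorem LC' {b c : Q} (hb : τ b = -b) (hc : τ c = -c) (v w U u x : Q) :
    U*(b*x*c*u*(v*w-w*v)) = b*x*c*u*(v*w-w*v)*τ U := by
  have := congrArg τ (h.LC hc hb (τ w) (τ v) U (τ u) (τ x))
  simp only [h.mul, h.comm_tau, hb, hc, h.inv] at this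
  linear_combination (norm := noncomm_ring) -this

end Ctx

/-- The largest ideal in the kernel of an additive functional on a monoid algebra. -/
theorem gapAlg {G : Type} [AddCommMonoid G] {Q : Type} [Ring Q] (f : G → Q) :
    ∃ (B : Type) (_ : CommRing B) (φ : G → B),
      φ 0 = 1 ∧ (∀ a b, φ (a + b) = φ a * φ b) ∧ (∀ g, φ g = 0 → f g = 0) ∧
      (∀ a b c e, (∀ g, f (a + g) - f (b + g) - f (c + g) + f (e + g) = 0) →
        φ a - φ b - φ c + φ e = 0) ∧
      (∀ a, (∀ g, f (a + g) = 0) → φ a = 0) := by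
  classical
  let V : AddMonoidAlgebra ℤ G →+ Q :=
    AddMonoidAlgebra.liftNC (Int.castAddHom Q) (fun g => f g.toAdd)
  have hV : ∀ g r, V (AddMonoidAlgebra.single g r) = (r : Q) * f g := by
    intro g r
    simp [V, AddMonoidAlgebra.liftNC_single]
  let I : Ideal (AddMonoidAlgebra ℤ G) :=
    { carrier := {p | ∀ q, V (p * q) = 0}
      add_mem' := by
        intro a b ha hb q
        rw [add_mul, map_add, ha q, hb q, add_zero]
      zero_mem' := by intro q; simp
      smul_mem' := by
        intro c p hp q
        have := hp (c * q)
        rw [smul_eq_mul, mul_comm c p, mul_assoc]; exact this }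
  have hI : ∀ p, p ∈ I ↔ ∀ q, V (p * q) = 0 := fun p => Iff.rfl
  refine ⟨AddMonoidAlgebra ℤ G ⧸ I, inferInstance,
    fun g => Ideal.Quotient.mk I (AddMonoidAlgebra.single g 1), ?_, ?_, ?_, ?_, ?_⟩
  · exact map_one _
  · intro a b
    rw [← map_mul, AddMonoidAlgebra.single_mul_single, one_mul]
  · intro g hg
    rw [Ideal.Quotient.eq_zero_iff_mem, hI] at hg
    have := hg 1
    rw [mul_one, hV] at this
    simpa using this
  · intro a b c e hrel
    simp only [← map_sub, ← map_add]
    rw [Ideal.Quotient.eq_zero_iff_mem, hI]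
    intro q
    induction q using AddMonoidAlgebra.induction_linear with
    | zero => simp
    | add x y hx hy => rw [mul_add, map_add, hx, hy, add_zero]
    | single m r =>
      simp only [add_mul, sub_mul, AddMonoidAlgebra.single_mul_single, map_add, map_sub, hV,
        one_mul]
      rw [← mul_sub, ← mul_sub, ← mul_add, hrel, mul_zero]
  · intro a ha
    rw [Ideal.Quotient.eq_zero_iff_mem, hI]
    intro q
    induction q using AddMonoidAlgebra.induction_linear with
    | zero => simp
    | add x y hx hy => rw [mul_add, map_add, hx, hy, add_zero]
    | single m r =>
      rw [AddMonoidAlgebra.single_mul_single, hV, ha, mul_zero]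

theorem mono_mem {B : Type} [CommRing B] (X0 X1 X2 : B) (h3 : X0 ^ 3 = 0) (a b c : ℕ)
    (habc : 3 ≤ a + b + c) :
    ∃ p q, X0 ^ a * X1 ^ b * X2 ^ c = (X1 - X0) * p + (X2 - X0) * q := by
  have : X0 ^ a * X1 ^ b * X2 ^ c ∈ Ideal.span {X1 - X0, X2 - X0} := by
    rw [← Ideal.Quotient.eq_zero_iff_mem]
    have e1 : Ideal.Quotient.mk (Ideal.span {X1 - X0, X2 - X0}) X1
        = Ideal.Quotient.mk (Ideal.span {X1 - X0, X2 - X0}) X0 :=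
      Ideal.Quotient.eq.2 (Ideal.subset_span (by simp))
    have e2 : Ideal.Quotient.mk (Ideal.span {X1 - X0, X2 - X0}) X2
        = Ideal.Quotient.mk (Ideal.span {X1 - X0, X2 - X0}) X0 :=
      Ideal.Quotient.eq.2 (Ideal.subset_span (by simp))
    rw [map_mul, map_mul, map_pow, map_pow, map_pow, e1, e2, ← pow_add, ← pow_add, ← map_pow,
      ← Nat.add_sub_cancel' habc, pow_add, h3, zero_mul, map_zero]
  rw [Ideal.mem_span_pair] at this
  obtain ⟨p, q, h⟩ := this
  exact ⟨p, q, by rw [← h]; ring⟩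

/-- total multiset of three gaps -/
abbrev G3 (d : ℕ) := Multiset (Fin d) × Multiset (Fin d) × Multiset (Fin d)

theorem phi_split {d : ℕ} {B : Type} [CommRing B] (φ : G3 d → B) (h0 : φ 0 = 1)
    (hadd : ∀ a b, φ (a + b) = φ a * φ b) (x : Fin d) (g : G3 d) :
    ∃ g' : G3 d, φ g = φ ({x}, 0, 0) ^ (g.1.count x) * φ (0, {x}, 0) ^ (g.2.1.count x) *
        φ (0, 0, {x}) ^ (g.2.2.count x) * φ g' ∧
      ∀ y, y ≠ x → (g'.1.count y = g.1.count y ∧ g'.2.1.count y = g.2.1.count y ∧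
        g'.2.2.count y = g.2.2.count y) := by
  classical
  have hpow : ∀ (n : ℕ) (a : G3 d), φ a ^ n = φ (n • a) := by
    intro n a
    induction n with
    | zero => simp [h0]
    | succ n ih => rw [pow_succ, ih, succ_nsmul, hadd]
  obtain ⟨m0, m1, m2⟩ := g
  refine ⟨(m0.filter (x ≠ ·), m1.filter (x ≠ ·), m2.filter (x ≠ ·)), ?_, ?_⟩
  · rw [hpow, hpow, hpow, ← hadd, ← hadd, ← hadd]
    have key : ∀ m : Multiset (Fin d), m = m.count x • {x} + m.filter (x ≠ ·) := by
      intro m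
      conv_lhs => rw [← Multiset.filter_add_not (x = ·) m]
      rw [Multiset.filter_eq, Multiset.nsmul_singleton]
    congr 1
    simp only [Prod.smul_mk, smul_zero, Prod.mk_add_mk, add_zero, zero_add]
    rw [← key, ← key, ← key]
  · intro y hy
    simp [hy.symm]

theorem gap3 {d : ℕ} {Q : Type} [Ring Q] {τ : Q → Q} (h : Ctx Q τ) (s : Fin d → Q)
    (hs3 : ∀ i, s i * s i * s i = 0) (A B : Q) (N : Multiset (Fin d))
    (hperm : ∀ l0 l0' l1 l1' l2 l2' : List (Fin d), l0.Perm l0' → l1.Perm l1' → l2.Perm l2' →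
      ((l0 ++ l1 ++ l2 : List (Fin d)) : Multiset (Fin d)) = N →
      (l0.map s).prod * A * (l1.map s).prod * B * (l2.map s).prod =
      (l0'.map s).prod * A * (l1'.map s).prod * B * (l2'.map s).prod)
    (hN : (∃ x y z, x ≠ y ∧ x ≠ z ∧ y ≠ z ∧ 3 ≤ N.count x ∧ 3 ≤ N.count y ∧ 3 ≤ N.count z) ∨
      (∃ x y, x ≠ y ∧ 3 ≤ N.count x ∧ 3 ≤ N.count y) ∧
        ∀ i u, s i * (A * u * B) = A * u * B * s i)
    (l0 l1 l2 : List (Fin d)) (hl : ((l0 ++ l1 ++ l2 : List (Fin d)) : Multiset (Fin d)) = N) :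
    (l0.map s).prod * A * (l1.map s).prod * B * (l2.map s).prod = 0 := by
  classical
  let val : List (Fin d) → List (Fin d) → List (Fin d) → Q := fun l0 l1 l2 =>
    (l0.map s).prod * A * (l1.map s).prod * B * (l2.map s).prod
  let f : G3 d → Q := fun g =>
    if g.1 + g.2.1 + g.2.2 = N then val g.1.toList g.2.1.toList g.2.2.toList else 0
  have hf : ∀ l0 l1 l2 : List (Fin d), ∀ m0 m1 m2 : Multiset (Fin d),
      m0 = l0 → m1 = l1 → m2 = l2 → m0 + m1 + m2 = N → f (m0, m1, m2) = val l0 l1 l2 := by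
    intro l0 l1 l2 m0 m1 m2 e0 e1 e2 hN
    simp only [f, if_pos hN]
    refine hperm _ _ _ _ _ _ ?_ ?_ ?_ ?_
    · rw [← Multiset.coe_eq_coe, Multiset.coe_toList, e0]
    · rw [← Multiset.coe_eq_coe, Multiset.coe_toList, e1]
    · rw [← Multiset.coe_eq_coe, Multiset.coe_toList, e2]
    · rw [← hN, ← Multiset.coe_add, ← Multiset.coe_add, Multiset.coe_toList, Multiset.coe_toList,
        Multiset.coe_toList]
  have hf0 : ∀ g : G3 d, g.1 + g.2.1 + g.2.2 ≠ N → f g = 0 := by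
    intro g hg; simp only [f, if_neg hg]
  obtain ⟨R, _, φ, h0, hadd, hker, hrel, hrel1⟩ := gapAlg f
  have hrel2 : ∀ a b, (∀ g, f (a + g) = f (b + g)) → φ a = φ b := by
    intro a b hab
    have := hrel a b a a (by intro g; simp [hab])
    linear_combination this
  let X : Fin d → R := fun x => φ ({x}, 0, 0)
  let Y : Fin d → R := fun x => φ (0, {x}, 0)
  let Z : Fin d → R := fun x => φ (0, 0, {x})
  have X3 : ∀ x, X x ^ 3 = 0 := by
    intro x
    have : X x ^ 3 = φ ({x} + {x} + {x}, 0, 0) := by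
      rw [pow_succ, pow_two, ← hadd, ← hadd]; rfl
    rw [this]
    apply hrel1
    rintro ⟨m0, m1, m2⟩
    induction m0 using Quotient.inductionOn with | _ k0
    induction m1 using Quotient.inductionOn with | _ k1
    induction m2 using Quotient.inductionOn with | _ k2
    by_cases ht : ({x} + {x} + {x} + (k0 : Multiset (Fin d))) + (k1 : Multiset (Fin d)) +
      (k2 : Multiset (Fin d)) = N
    · have := hf (x :: x :: x :: k0) k1 k2 ({x} + {x} + {x} + (k0 : Multiset (Fin d))) k1 k2
        (by simp [← Multiset.cons_coe, ← Multiset.singleton_add, add_assoc]) rfl rfl ht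
      have e : val (x :: x :: x :: k0) k1 k2 = 0 := by
        simp only [val, List.map_cons, List.prod_cons]
        linear_combination (norm := noncomm_ring) hs3 x * (k0.map s).prod * A * (k1.map s).prod * B
          * (k2.map s).prod
      rw [e] at this
      simpa using this
    · apply hf0
      simpa using ht
  have XY : ∀ x y, (X x - Y x) * (X y - Y y) = 0 := by
    intro x y
    have e : (X x - Y x) * (X y - Y y) = φ ({x} + {y}, 0, 0) - φ ({x}, {y}, 0) - φ ({y}, {x}, 0)
        + φ (0, {x} + {y}, 0) := by
      have e1 : φ ({x} + {y}, 0, 0) = X x * X y := by rw [← hadd]; simp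
      have e2 : φ ({x}, {y}, 0) = X x * Y y := by rw [← hadd]; simp
      have e3 : φ ({y}, {x}, 0) = X y * Y x := by rw [← hadd]; simp
      have e4 : φ (0, {x} + {y}, 0) = Y x * Y y := by rw [← hadd]; simp
      rw [e1, e2, e3, e4]; ring
    rw [e]
    apply hrel
    rintro ⟨m0, m1, m2⟩
    induction m0 using Quotient.inductionOn with | _ k0
    induction m1 using Quotient.inductionOn with | _ k1
    induction m2 using Quotient.inductionOn with | _ k2
    simp only [Prod.mk_add_mk, zero_add, Multiset.quot_mk_to_coe]
    by_cases ht : ({x} + {y} + (k0 : Multiset (Fin d))) + (k1 : Multiset (Fin d)) +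
      (k2 : Multiset (Fin d)) = N
    · have f1 := hf (k0 ++ [x, y]) k1 k2 ({x} + {y} + (k0 : Multiset (Fin d))) k1 k2
        (by simp [← Multiset.cons_coe, ← Multiset.coe_add, ← Multiset.singleton_add]; abel)
        rfl rfl ht
      have f1' := hf (k0 ++ [y, x]) k1 k2 ({x} + {y} + (k0 : Multiset (Fin d))) k1 k2
        (by simp [← Multiset.cons_coe, ← Multiset.coe_add, ← Multiset.singleton_add]; abel)
        rfl rfl ht
      have f2 := hf (k0 ++ [x]) (y :: k1) k2 ({x} + (k0 : Multiset (Fin d)))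
        ({y} + (k1 : Multiset (Fin d))) k2
        (by simp [← Multiset.cons_coe, ← Multiset.coe_add, ← Multiset.singleton_add]; abel)
        (by simp [← Multiset.cons_coe, ← Multiset.singleton_add]) rfl (by rw [← ht]; abel)
      have f3 := hf (k0 ++ [y]) (x :: k1) k2 ({y} + (k0 : Multiset (Fin d)))
        ({x} + (k1 : Multiset (Fin d))) k2
        (by simp [← Multiset.cons_coe, ← Multiset.coe_add, ← Multiset.singleton_add]; abel)
        (by simp [← Multiset.cons_coe, ← Multiset.singleton_add]) rfl (by rw [← ht]; abel)
      have f4 := hf k0 (x :: y :: k1) k2 k0 ({x} + {y} + (k1 : Multiset (Fin d))) k2 rfl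
        (by simp [← Multiset.cons_coe, ← Multiset.singleton_add, add_assoc]) rfl (by rw [← ht]; abel)
      have f4' := hf k0 (y :: x :: k1) k2 k0 ({x} + {y} + (k1 : Multiset (Fin d))) k2 rfl
        (by simp [← Multiset.cons_coe, ← Multiset.singleton_add]; abel) rfl (by rw [← ht]; abel)
      simp only [val, List.map_cons, List.map_append, List.prod_append, List.prod_cons,
        List.map_nil, List.prod_nil, mul_one] at f1 f1' f2 f3 f4 f4'
      have hn := h.N (s x) (s y) A
      linear_combination (norm := noncomm_ring) h.three (f ({x} + {y} + (k0 : Multiset (Fin d)), k1, k2))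
        + h.three (f (k0, {x} + {y} + (k1 : Multiset (Fin d)), k2))
        - (k0.map s).prod * hn * (k1.map s).prod * B * (k2.map s).prod - f1 - f1' - f2 - f3
        - f4 - f4'
    · rw [hf0, hf0, hf0, hf0]
      · simp
      all_goals
        intro hc; apply ht; refine Eq.trans ?_ hc; first | rfl | (dsimp only; abel)
  have YZ : ∀ x y, (Y x - Z x) * (Y y - Z y) = 0 := by
    intro x y
    have e : (Y x - Z x) * (Y y - Z y) = φ (0, {x} + {y}, 0) - φ (0, {x}, {y}) - φ (0, {y}, {x})
        + φ (0, 0, {x} + {y}) := by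
      have e1 : φ (0, {x} + {y}, 0) = Y x * Y y := by rw [← hadd]; simp
      have e2 : φ (0, {x}, {y}) = Y x * Z y := by rw [← hadd]; simp
      have e3 : φ (0, {y}, {x}) = Y y * Z x := by rw [← hadd]; simp
      have e4 : φ (0, 0, {x} + {y}) = Z x * Z y := by rw [← hadd]; simp
      rw [e1, e2, e3, e4]; ring
    rw [e]
    apply hrel
    rintro ⟨m0, m1, m2⟩
    induction m0 using Quotient.inductionOn with | _ k0
    induction m1 using Quotient.inductionOn with | _ k1
    induction m2 using Quotient.inductionOn with | _ k2
    simp only [Prod.mk_add_mk, zero_add, Multiset.quot_mk_to_coe]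
    by_cases ht : (k0 : Multiset (Fin d)) + ({x} + {y} + (k1 : Multiset (Fin d))) +
      (k2 : Multiset (Fin d)) = N
    · have f1 := hf k0 (k1 ++ [x, y]) k2 k0 ({x} + {y} + (k1 : Multiset (Fin d))) k2 rfl
        (by simp [← Multiset.cons_coe, ← Multiset.coe_add, ← Multiset.singleton_add]; abel)
        rfl ht
      have f1' := hf k0 (k1 ++ [y, x]) k2 k0 ({x} + {y} + (k1 : Multiset (Fin d))) k2 rfl
        (by simp [← Multiset.cons_coe, ← Multiset.coe_add, ← Multiset.singleton_add]; abel)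
        rfl ht
      have f2 := hf k0 (k1 ++ [x]) (y :: k2) k0 ({x} + (k1 : Multiset (Fin d)))
        ({y} + (k2 : Multiset (Fin d))) rfl
        (by simp [← Multiset.cons_coe, ← Multiset.coe_add, ← Multiset.singleton_add]; abel)
        (by simp [← Multiset.cons_coe, ← Multiset.singleton_add]) (by rw [← ht]; abel)
      have f3 := hf k0 (k1 ++ [y]) (x :: k2) k0 ({y} + (k1 : Multiset (Fin d)))
        ({x} + (k2 : Multiset (Fin d))) rfl
        (by simp [← Multiset.cons_coe, ← Multiset.coe_add, ← Multiset.singleton_add]; abel)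
        (by simp [← Multiset.cons_coe, ← Multiset.singleton_add]) (by rw [← ht]; abel)
      have f4 := hf k0 k1 (x :: y :: k2) k0 k1 ({x} + {y} + (k2 : Multiset (Fin d))) rfl rfl
        (by simp [← Multiset.cons_coe, ← Multiset.singleton_add, add_assoc]) (by rw [← ht]; abel)
      have f4' := hf k0 k1 (y :: x :: k2) k0 k1 ({x} + {y} + (k2 : Multiset (Fin d))) rfl rfl
        (by simp [← Multiset.cons_coe, ← Multiset.singleton_add]; abel) (by rw [← ht]; abel)
      simp only [val, List.map_cons, List.map_append, List.prod_append, List.prod_cons,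
        List.map_nil, List.prod_nil, mul_one] at f1 f1' f2 f3 f4 f4'
      have hn := h.N (s x) (s y) B
      linear_combination (norm := noncomm_ring) h.three (f (k0, {x} + {y} + (k1 : Multiset (Fin d)), k2))
        + h.three (f (k0, k1, {x} + {y} + (k2 : Multiset (Fin d))))
        - (k0.map s).prod * A * (k1.map s).prod * hn * (k2.map s).prod - f1 - f1' - f2 - f3
        - f4 - f4'
    · rw [hf0, hf0, hf0, hf0]
      · simp
      all_goals
        intro hc; apply ht; refine Eq.trans ?_ hc; first | rfl | (dsimp only; abel)
  have XZ : ∀ x y, (X x - Z x) * (X y - Z y) = 0 := by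
    intro x y
    have e : (X x - Z x) * (X y - Z y) = φ ({x} + {y}, 0, 0) - φ ({x}, 0, {y}) - φ ({y}, 0, {x})
        + φ (0, 0, {x} + {y}) := by
      have e1 : φ ({x} + {y}, 0, 0) = X x * X y := by rw [← hadd]; simp
      have e2 : φ ({x}, 0, {y}) = X x * Z y := by rw [← hadd]; simp
      have e3 : φ ({y}, 0, {x}) = X y * Z x := by rw [← hadd]; simp
      have e4 : φ (0, 0, {x} + {y}) = Z x * Z y := by rw [← hadd]; simp
      rw [e1, e2, e3, e4]; ring
    rw [e]
    apply hrel
    rintro ⟨m0, m1, m2⟩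
    induction m0 using Quotient.inductionOn with | _ k0
    induction m1 using Quotient.inductionOn with | _ k1
    induction m2 using Quotient.inductionOn with | _ k2
    simp only [Prod.mk_add_mk, zero_add, Multiset.quot_mk_to_coe]
    by_cases ht : ({x} + {y} + (k0 : Multiset (Fin d))) + (k1 : Multiset (Fin d)) +
      (k2 : Multiset (Fin d)) = N
    · have f1 := hf (k0 ++ [x, y]) k1 k2 ({x} + {y} + (k0 : Multiset (Fin d))) k1 k2
        (by simp [← Multiset.cons_coe, ← Multiset.coe_add, ← Multiset.singleton_add]; abel)
        rfl rfl ht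
      have f1' := hf (k0 ++ [y, x]) k1 k2 ({x} + {y} + (k0 : Multiset (Fin d))) k1 k2
        (by simp [← Multiset.cons_coe, ← Multiset.coe_add, ← Multiset.singleton_add]; abel)
        rfl rfl ht
      have f2 := hf (k0 ++ [x]) k1 (y :: k2) ({x} + (k0 : Multiset (Fin d))) k1
        ({y} + (k2 : Multiset (Fin d)))
        (by simp [← Multiset.cons_coe, ← Multiset.coe_add, ← Multiset.singleton_add]; abel) rfl
        (by simp [← Multiset.cons_coe, ← Multiset.singleton_add]) (by rw [← ht]; abel)
      have f3 := hf (k0 ++ [y]) k1 (x :: k2) ({y} + (k0 : Multiset (Fin d))) k1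
        ({x} + (k2 : Multiset (Fin d)))
        (by simp [← Multiset.cons_coe, ← Multiset.coe_add, ← Multiset.singleton_add]; abel) rfl
        (by simp [← Multiset.cons_coe, ← Multiset.singleton_add]) (by rw [← ht]; abel)
      have f4 := hf k0 k1 (x :: y :: k2) k0 k1 ({x} + {y} + (k2 : Multiset (Fin d))) rfl rfl
        (by simp [← Multiset.cons_coe, ← Multiset.singleton_add, add_assoc]) (by rw [← ht]; abel)
      have f4' := hf k0 k1 (y :: x :: k2) k0 k1 ({x} + {y} + (k2 : Multiset (Fin d))) rfl rfl
        (by simp [← Multiset.cons_coe, ← Multiset.singleton_add]; abel) (by rw [← ht]; abel)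
      simp only [val, List.map_cons, List.map_append, List.prod_append, List.prod_cons,
        List.map_nil, List.prod_nil, mul_one] at f1 f1' f2 f3 f4 f4'
      have hn := h.N (s x) (s y) (A * (k1.map s).prod * B)
      linear_combination (norm := noncomm_ring) h.three (f ({x} + {y} + (k0 : Multiset (Fin d)), k1, k2))
        + h.three (f (k0, k1, {x} + {y} + (k2 : Multiset (Fin d))))
        - (k0.map s).prod * hn * (k2.map s).prod - f1 - f1' - f2 - f3
        - f4 - f4'
    · rw [hf0, hf0, hf0, hf0]
      · simp
      all_goals
        intro hc; apply ht; refine Eq.trans ?_ hc; first | rfl | (dsimp only; abel)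
  have hcount : ∀ x, 3 ≤ N.count x → 3 ≤ (l0 : Multiset (Fin d)).count x +
      (l1 : Multiset (Fin d)).count x + (l2 : Multiset (Fin d)).count x := by
    intro x hx
    rw [← hl, ← Multiset.coe_add, ← Multiset.coe_add, Multiset.count_add, Multiset.count_add] at hx
    exact hx
  rw [show (l0.map s).prod * A * (l1.map s).prod * B * (l2.map s).prod = f (l0, l1, l2) from
    (hf l0 l1 l2 l0 l1 l2 rfl rfl rfl (by rw [← hl]; simp)).symm]
  apply hker
  have YmZ : ∀ x y, (Y x - X x) * (Z y - X y) + (Z x - X x) * (Y y - X y) = 0 := by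
    intro x y
    linear_combination XY x y + XZ x y - YZ x y
  rcases hN with ⟨x, y, z, hxy, hxz, hyz, cx, cy, cz⟩ | ⟨⟨x, y, hxy, cx, cy⟩, hcomm⟩
  · obtain ⟨g1, e1, k1⟩ := phi_split φ h0 hadd x (l0, l1, l2)
    obtain ⟨g2, e2, k2⟩ := phi_split φ h0 hadd y g1
    obtain ⟨g3, e3, k3⟩ := phi_split φ h0 hadd z g2
    obtain ⟨p1, q1, m1⟩ := mono_mem (X x) (Y x) (Z x) (X3 x) _ _ _ (hcount x cx)
    obtain ⟨p2, q2, m2⟩ := mono_mem (X y) (Y y) (Z y) (X3 y) _ _ _ (hcount y cy)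
    obtain ⟨p3, q3, m3⟩ := mono_mem (X z) (Y z) (Z z) (X3 z) _ _ _ (hcount z cz)
    rw [(k1 y hxy.symm).1, (k1 y hxy.symm).2.1, (k1 y hxy.symm).2.2] at e2
    rw [(k2 z hyz.symm).1, (k2 z hyz.symm).2.1, (k2 z hyz.symm).2.2,
      (k1 z hxz.symm).1, (k1 z hxz.symm).2.1, (k1 z hxz.symm).2.2] at e3
    rw [e1, e2, e3]
    change (X x ^ _ * Y x ^ _ * Z x ^ _) * ((X y ^ _ * Y y ^ _ * Z y ^ _) *
      ((X z ^ _ * Y z ^ _ * Z z ^ _) * _)) = 0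
    rw [m1, m2, m3]
    have hxy1 : (Y x - X x) * (Y y - X y) = 0 := by linear_combination XY x y
    have hxz1 : (Y x - X x) * (Y z - X z) = 0 := by linear_combination XY x z
    have hyz1 : (Y y - X y) * (Y z - X z) = 0 := by linear_combination XY y z
    have hxy2 : (Z x - X x) * (Z y - X y) = 0 := by linear_combination XZ x y
    have hxz2 : (Z x - X x) * (Z z - X z) = 0 := by linear_combination XZ x z
    have hyz2 : (Z y - X y) * (Z z - X z) = 0 := by linear_combination XZ y z
    generalize Y x - X x = a1 at *
    generalize Y y - X y = a2 at *
    generalize Y z - X z = a3 at *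
    generalize Z x - X x = b1 at *
    generalize Z y - X y = b2 at *
    generalize Z z - X z = b3 at *
    linear_combination φ g3 * (hxy1 * (p1 * p2) * (a3 * p3 + b3 * q3)
      + hxy2 * (q1 * q2) * (a3 * p3 + b3 * q3)
      + hxz1 * (p1 * q2 * p3 * b2) + hyz2 * (p1 * q2 * q3 * a1)
      + hyz1 * (q1 * p2 * p3 * b1) + hxz2 * (q1 * p2 * q3 * a2))
  · obtain ⟨g1, e1, k1⟩ := phi_split φ h0 hadd x (l0, l1, l2)
    obtain ⟨g2, e2, k2⟩ := phi_split φ h0 hadd y g1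
    obtain ⟨p1, q1, m1⟩ := mono_mem (X x) (Y x) (Z x) (X3 x) _ _ _ (hcount x cx)
    obtain ⟨p2, q2, m2⟩ := mono_mem (X y) (Y y) (Z y) (X3 y) _ _ _ (hcount y cy)
    rw [(k1 y hxy.symm).1, (k1 y hxy.symm).2.1, (k1 y hxy.symm).2.2] at e2
    rw [e1, e2]
    change (X x ^ _ * Y x ^ _ * Z x ^ _) * ((X y ^ _ * Y y ^ _ * Z y ^ _) * _) = 0
    rw [m1, m2]
    have hZX : ∀ x, Z x = X x := by
      intro x
      apply hrel2
      rintro ⟨m0, m1, m2⟩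
      induction m0 using Quotient.inductionOn with | _ k0
      induction m1 using Quotient.inductionOn with | _ k1
      induction m2 using Quotient.inductionOn with | _ k2
      simp only [Prod.mk_add_mk, zero_add, Multiset.quot_mk_to_coe]
      by_cases ht : ({x} + (k0 : Multiset (Fin d))) + (k1 : Multiset (Fin d)) +
        (k2 : Multiset (Fin d)) = N
      · have f1 := hf (k0 ++ [x]) k1 k2 ({x} + (k0 : Multiset (Fin d))) k1 k2
          (by simp [← Multiset.cons_coe, ← Multiset.coe_add, ← Multiset.singleton_add]; abel)
          rfl rfl ht
        have f2 := hf k0 k1 (x :: k2) k0 k1 ({x} + (k2 : Multiset (Fin d))) rfl rfl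
          (by simp [← Multiset.cons_coe, ← Multiset.singleton_add]) (by rw [← ht]; abel)
        rw [f1, f2]
        simp only [val, List.map_cons, List.map_append, List.prod_append, List.prod_cons,
          List.map_nil, List.prod_nil, mul_one]
        have := hcomm x (k1.map s).prod
        linear_combination (norm := noncomm_ring) -((k0.map s).prod * this * (k2.map s).prod)
      · rw [hf0, hf0]
        all_goals
          intro hc; apply ht; refine Eq.trans ?_ hc; first | rfl | (dsimp only; abel)
    rw [hZX, hZX]
    linear_combination XY x y * (p1 * p2 * φ g2)

inductive Tok (Q : Type) [Ring Q] (τ : Q → Q) (d : ℕ) : Type where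
  | l (i : Fin d) : Tok Q τ d
  | b (q : Q) (hq : τ q = -q) : Tok Q τ d
  | c (v w : Q) : Tok Q τ d

namespace Tok
variable {Q : Type} [Ring Q] {τ : Q → Q} {d : ℕ}

def ev (s : Fin d → Q) : Tok Q τ d → Q
  | l i => s i
  | b q _ => q
  | c v w => v * w - w * v

def wb : Tok Q τ d → ℕ
  | l _ => 0
  | b _ _ => 1
  | c _ _ => 0

def wc : Tok Q τ d → ℕ
  | l _ => 0
  | b _ _ => 0
  | c _ _ => 1

def wl (i : Fin d) : Tok Q τ d → ℕ
  | l j => if j = i then 1 else 0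
  | b _ _ => 0
  | c _ _ => 0

def E (s : Fin d → Q) (t : List (Tok Q τ d)) : Q := (t.map (ev s)).prod
def nb (t : List (Tok Q τ d)) : ℕ := (t.map wb).sum
def nc (t : List (Tok Q τ d)) : ℕ := (t.map wc).sum
def cl (i : Fin d) (t : List (Tok Q τ d)) : ℕ := (t.map (wl i)).sum

@[simp] theorem E_nil (s : Fin d → Q) : E s ([] : List (Tok Q τ d)) = 1 := rfl
@[simp] theorem E_cons (s : Fin d → Q) (x : Tok Q τ d) (t) : E s (x :: t) = ev s x * E s t := by
  simp [E]
@[simp] theorem E_append (s : Fin d → Q) (t u : List (Tok Q τ d)) :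
    E s (t ++ u) = E s t * E s u := by simp [E]
@[simp] theorem E_l (s : Fin d → Q) (k : List (Fin d)) :
    E s (k.map (l : Fin d → Tok Q τ d)) = (k.map s).prod := by
  simp [E, Function.comp_def, ev]

@[simp] theorem nb_nil : nb ([] : List (Tok Q τ d)) = 0 := rfl
@[simp] theorem nb_cons (x : Tok Q τ d) (t) : nb (x :: t) = wb x + nb t := by simp [nb]
@[simp] theorem nb_append (t u : List (Tok Q τ d)) : nb (t ++ u) = nb t + nb u := by simp [nb]
@[simp] theorem nb_l (k : List (Fin d)) : nb (k.map (l : Fin d → Tok Q τ d)) = 0 := by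
  simp [nb, Function.comp_def, wb]

@[simp] theorem nc_nil : nc ([] : List (Tok Q τ d)) = 0 := rfl
@[simp] theorem nc_cons (x : Tok Q τ d) (t) : nc (x :: t) = wc x + nc t := by simp [nc]
@[simp] theorem nc_append (t u : List (Tok Q τ d)) : nc (t ++ u) = nc t + nc u := by simp [nc]
@[simp] theorem nc_l (k : List (Fin d)) : nc (k.map (l : Fin d → Tok Q τ d)) = 0 := by
  simp [nc, Function.comp_def, wc]

@[simp] theorem cl_nil (i : Fin d) : cl i ([] : List (Tok Q τ d)) = 0 := rfl
@[simp] theorem cl_cons (i : Fin d) (x : Tok Q τ d) (t) : cl i (x :: t) = wl i x + cl i t := by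
  simp [cl]
@[simp] theorem cl_append (i : Fin d) (t u : List (Tok Q τ d)) :
    cl i (t ++ u) = cl i t + cl i u := by simp [cl]
@[simp] theorem cl_l (i : Fin d) (k : List (Fin d)) :
    cl i (k.map (l : Fin d → Tok Q τ d)) = k.count i := by
  induction k with
  | nil => simp
  | cons a k ih => rw [List.map_cons, cl_cons, ih, List.count_cons]; simp [wl]; omega

def Good (t : List (Tok Q τ d)) : Prop :=
  nc t = 1 ∧ ∃ T : Finset (Fin d), 6 ≤ 2 * nb t + T.card ∧ ∀ i ∈ T, 3 ≤ cl i t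

theorem Good.of {t t' : List (Tok Q τ d)} (h : Good t) (h1 : nc t' = nc t) (h2 : nb t' = nb t)
    (h3 : ∀ i, cl i t' = cl i t) : Good t' := by
  obtain ⟨a, T, b, c⟩ := h
  exact ⟨by omega, T, by omega, fun i hi => by rw [h3]; exact c i hi⟩

theorem parse0 (t : List (Tok Q τ d)) (hb : nb t = 0) (hc : nc t = 0) :
    ∃ k : List (Fin d), t = k.map l := by
  induction t with
  | nil => exact ⟨[], rfl⟩
  | cons x t ih =>
    rw [nb_cons] at hb; rw [nc_cons] at hc
    obtain ⟨k, rfl⟩ := ih (by omega) (by omega)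
    cases x with
    | l i => exact ⟨i :: k, rfl⟩
    | b q hq => simp [wb] at hb
    | c v w => simp [wc] at hc

theorem parseC (t : List (Tok Q τ d)) (hc : nc t = 1) :
    ∃ p v w q, t = p ++ c v w :: q ∧ nc p = 0 ∧ nc q = 0 := by
  induction t with
  | nil => simp at hc
  | cons x t ih =>
    rw [nc_cons] at hc
    cases x with
    | l i =>
      obtain ⟨p, v, w, q, rfl, h1, h2⟩ := ih (by simpa [wc] using hc)
      exact ⟨l i :: p, v, w, q, rfl, by simpa [wc] using h1, h2⟩
    | b r hr =>
      obtain ⟨p, v, w, q, rfl, h1, h2⟩ := ih (by simpa [wc] using hc)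
      exact ⟨b r hr :: p, v, w, q, rfl, by simpa [wc] using h1, h2⟩
    | c v w => exact ⟨[], v, w, t, rfl, rfl, by simpa [wc] using hc⟩

theorem parseB (t : List (Tok Q τ d)) (hc : nc t = 0) (hb : 1 ≤ nb t) :
    ∃ (k : List (Fin d)) (r : Q) (hr : τ r = -r) (q : List (Tok Q τ d)),
      t = k.map l ++ b r hr :: q ∧ nc q = 0 ∧ nb t = nb q + 1 := by
  induction t with
  | nil => simp at hb
  | cons x t ih =>
    rw [nc_cons] at hc
    cases x with
    | l i =>
      obtain ⟨k, r, hr, q, rfl, h1, h2⟩ := ih (by simpa [wc] using hc) (by simpa [wb] using hb)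
      exact ⟨i :: k, r, hr, q, rfl, h1, by rw [nb_cons, h2]; simp [wb]⟩
    | b r hr =>
      exact ⟨[], r, hr, t, rfl, by simpa [wc] using hc, by rw [nb_cons]; simp [wb]; omega⟩
    | c v w => simp [wc] at hc

theorem Z3 (h : Ctx Q τ) (s : Fin d → Q) (t : List (Tok Q τ d)) (hc : nc t = 1) (hb : 3 ≤ nb t) :
    E s t = 0 := by
  obtain ⟨p, v, w, q, rfl, hp, hq⟩ := parseC t hc
  simp only [nb_append, nb_cons, wb] at hb
  have one : ∀ q : List (Tok Q τ d), nc q = 0 → 1 ≤ nb q → ∃ x b y, τ b = -b ∧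
      E s q = x * b * y := by
    intro q hq hb
    obtain ⟨k1, b1, h1, q1, rfl, hq1, e1⟩ := parseB q hq (by omega)
    exact ⟨_, b1, _, h1, by simp [ev, mul_assoc]; rfl⟩
  have two : ∀ q : List (Tok Q τ d), nc q = 0 → 2 ≤ nb q → ∃ x b y c z, τ b = -b ∧ τ c = -c ∧
      E s q = x * b * y * c * z := by
    intro q hq hb
    obtain ⟨k1, b1, h1, q1, rfl, hq1, e1⟩ := parseB q hq (by omega)
    obtain ⟨x, c, y, hc, e⟩ := one q1 hq1 (by omega)
    exact ⟨_, b1, x, c, y, h1, hc, by simp only [E_append, E_cons, e, ev, mul_assoc]; rfl⟩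
  have three : ∀ q : List (Tok Q τ d), nc q = 0 → 3 ≤ nb q → ∃ x b y c z e u, τ b = -b ∧ τ c = -c ∧
      τ e = -e ∧ E s q = x * (b * y * c * z * e) * u := by
    intro q hq hb
    obtain ⟨k1, b1, h1, q1, rfl, hq1, e1⟩ := parseB q hq (by omega)
    obtain ⟨x, c, y, e, z, hc, he, e⟩ := two q1 hq1 (by omega)
    exact ⟨_, b1, x, c, y, _, z, h1, hc, he, by simp only [E_append, E_cons, e, ev, mul_assoc]; rfl⟩
  rw [E_append, E_cons, ev]
  rcases Nat.lt_or_ge (nb p) 1 with h0 | h0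
  · obtain ⟨x, b, y, c, z, e, u, hb, hc, he, eq⟩ := three q hq (by omega)
    rw [eq]
    linear_combination (norm := noncomm_ring) E s p * h.K4L hb hc he y z x v w * u
  rcases Nat.lt_or_ge (nb p) 2 with h1 | h1
  · obtain ⟨x, b, y, hb, eq⟩ := one p hp (by omega)
    obtain ⟨x', c, y', e, z', hc, he, eq'⟩ := two q hq (by omega)
    rw [eq, eq']
    linear_combination (norm := noncomm_ring) x * h.Z3b hb hc he v w y x' y' * z'
  rcases Nat.lt_or_ge (nb p) 3 with h2 | h2
  · obtain ⟨x, b, y, c, z, hb, hc, eq⟩ := two p hp (by omega)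
    obtain ⟨x', e, y', he, eq'⟩ := one q hq (by omega)
    rw [eq, eq']
    linear_combination (norm := noncomm_ring) x * h.Z3c hb hc he v w y z x' * y'
  · obtain ⟨x, b, y, c, z, e, u, hb, hc, he, eq⟩ := three p hp (by omega)
    rw [eq]
    linear_combination (norm := noncomm_ring) x * h.K4 hb hc he y z u v w * E s q

section step
variable (h : Ctx Q τ) (s : Fin d → Q) (hsym : ∀ i, τ (s i) = s i)
  (hs3 : ∀ i, s i * s i * s i = 0) (n : ℕ)
  (IH : ∀ t : List (Tok Q τ d), nb t = n + 1 → Good t → E s t = 0)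
include h hsym IH

theorem swapT (p q : List (Tok Q τ d)) (i j : Fin d) (hg : Good (p ++ l i :: l j :: q))
    (hn : nb (p ++ l i :: l j :: q) = n) :
    E s (p ++ l i :: l j :: q) = E s (p ++ l j :: l i :: q) := by
  have hk : τ (s i * s j - s j * s i) = -(s i * s j - s j * s i) := by
    rw [h.comm_tau, hsym, hsym]; abel
  have := IH (p ++ b _ hk :: q) (by simp [wb] at hn ⊢; omega) (by
    obtain ⟨h1, T, h2, h3⟩ := hg
    refine ⟨by simpa [wc] using h1, (T.erase i).erase j, ?_, ?_⟩
    · have e1 := Finset.pred_card_le_card_erase (s := T) (a := i)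
      have e2 := Finset.pred_card_le_card_erase (s := T.erase i) (a := j)
      simp [wb] at h2 ⊢; omega
    · intro k hk
      simp only [Finset.mem_erase] at hk
      have := h3 k hk.2.2
      simpa [wl, hk.1.symm, hk.2.1.symm] using this)
  simp only [E_append, E_cons, ev] at this ⊢
  linear_combination (norm := noncomm_ring) this

theorem permT (k k' : List (Fin d)) (hk : k.Perm k') : ∀ (p q : List (Tok Q τ d)),
    Good (p ++ k.map l ++ q) → nb (p ++ k.map l ++ q) = n →
    E s (p ++ k.map l ++ q) = E s (p ++ k'.map l ++ q) := by
  induction hk with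
  | nil => intro p q _ _; rfl
  | cons x hk ih =>
    intro p q hg hn
    have := ih (p ++ [l x]) q (by simpa using hg) (by simpa using hn)
    simpa using this
  | swap x y k =>
    intro p q hg hn
    have := swapT h s hsym n IH p (k.map l ++ q) y x (by simpa using hg) (by simpa using hn)
    simpa using this
  | trans h1 h2 ih1 ih2 =>
    intro p q hg hn
    rw [ih1 p q hg hn]
    apply ih2
    · refine hg.of (by simp) (by simp) (fun i => by simp [h1.count_eq])
    · rw [← hn]; simp

include hs3

theorem gapT (TA TB : List (Tok Q τ d)) (l0 l1 l2 : List (Fin d))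
    (hg : Good (l0.map l ++ TA ++ l1.map l ++ TB ++ l2.map l))
    (hn : nb TA + nb TB = n) (hclA : ∀ i, cl i TA = 0) (hclB : ∀ i, cl i TB = 0)
    (hN : n ≤ 1 ∨ n ≤ 2 ∧ ∀ i u, s i * (E s TA * u * E s TB) = E s TA * u * E s TB * s i) :
    E s (l0.map l ++ TA ++ l1.map l ++ TB ++ l2.map l) = 0 := by
  simp only [E_append, E_l]
  refine gap3 h s hs3 (E s TA) (E s TB) _ ?_ ?_ l0 l1 l2 rfl
  · intro k0 k0' k1 k1' k2 k2' p0 p1 p2 hk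
    have hgk : ∀ k0' k1' k2' : List (Fin d), k0'.Perm k0 → k1'.Perm k1 → k2'.Perm k2 →
        Good (k0'.map l ++ TA ++ k1'.map l ++ TB ++ k2'.map l) := by
      intro k0' k1' k2' p0 p1 p2
      refine hg.of (by simp) (by simp) ?_
      intro i
      have := congrArg (Multiset.count i) hk
      simp only [Multiset.coe_count, List.count_append] at this
      simp [hclA, hclB, p0.count_eq, p1.count_eq, p2.count_eq]
      omega
    have a1 := permT h s hsym n IH k0 k0' p0 [] (TA ++ k1.map l ++ TB ++ k2.map l)
      (by simpa using hgk k0 k1 k2 (List.Perm.refl _) (List.Perm.refl _) (List.Perm.refl _))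
      (by simp; omega)
    have a2 := permT h s hsym n IH k1 k1' p1 (k0'.map l ++ TA) (TB ++ k2.map l)
      (by simpa using hgk k0' k1 k2 p0.symm (List.Perm.refl _) (List.Perm.refl _))
      (by simp; omega)
    have a3 := permT h s hsym n IH k2 k2' p2 (k0'.map l ++ TA ++ k1'.map l ++ TB) []
      (by simpa using hgk k0' k1' k2 p0.symm p1.symm (List.Perm.refl _))
      (by simp; omega)
    simp only [E_append, E_l, E_nil, mul_one, one_mul, mul_assoc] at a1 a2 a3 ⊢
    rw [a1, a2, a3]
  · obtain ⟨_, T, h2, h3⟩ := hg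
    simp only [nb_append, nb_l, cl_append, cl_l, hclA, hclB] at h2 h3
    have h3' : ∀ i ∈ T, 3 ≤ Multiset.count i ((l0 ++ l1 ++ l2 : List (Fin d)) : Multiset (Fin d)) := by
      intro i hi
      have := h3 i hi
      simp only [Multiset.coe_count, List.count_append]; omega
    rcases hN with hN | ⟨hN, hcomm⟩
    · left
      obtain ⟨x, y, z, hx, hy, hz, hxy, hxz, hyz⟩ := Finset.two_lt_card_iff.1
        (show 2 < T.card by omega)
      exact ⟨x, y, z, hxy, hxz, hyz, h3' x hx, h3' y hy, h3' z hz⟩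
    · right
      obtain ⟨x, hx, y, hy, hxy⟩ := Finset.one_lt_card.1 (show 1 < T.card by omega)
      exact ⟨⟨x, y, hxy, h3' x hx, h3' y hy⟩, hcomm⟩

theorem tauL (k : List (Fin d)) (h1 : τ 1 = 1) : τ ((k.map s).prod) = (k.reverse.map s).prod := by
  induction k with
  | nil => simpa using h1
  | cons x k ih => simp [h.mul, ih, hsym]

theorem stepT (hn : n ≤ 2) (t : List (Tok Q τ d)) (ht : nb t = n) (hg : Good t) : E s t = 0 := by
  have h1 : τ 1 = 1 := by
    have e := h.mul 1 (τ 1)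
    rw [one_mul, h.inv, one_mul] at e
    exact e.symm
  have tl := fun k => tauL h s hsym hs3 n IH k h1
  obtain ⟨p, v, w, q, rfl, hp, hq⟩ := parseC t hg.1
  simp only [nb_append, nb_cons, wb] at ht
  by_cases p0 : nb p = 0
  · obtain ⟨k0, rfl⟩ := parse0 p p0 hp
    by_cases q0 : nb q = 0
    · -- no skews
      obtain ⟨k1, rfl⟩ := parse0 q q0 hq
      have := gapT h s hsym hs3 n IH [c v w] [] k0 k1 [] (by simpa using hg)
        (by simp [wb]; omega) (by simp [wl]) (by simp) (by left; omega)
      simpa using this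
    · obtain ⟨k1, b1, hb1, q, rfl, hq, e⟩ := parseB q hq (by omega)
      by_cases q0 : nb q = 0
      · obtain ⟨k2, rfl⟩ := parse0 q q0 hq
        have := gapT h s hsym hs3 n IH [c v w] [b b1 hb1] k0 k1 k2 (by simpa using hg)
          (by simp [wb]; omega) (by simp [wl]) (by simp [wl]) (by left; omega)
        simpa using this
      · obtain ⟨k2, b2, hb2, q, rfl, hq, e'⟩ := parseB q hq (by omega)
        obtain ⟨k3, rfl⟩ := parse0 q (by omega) hq
        have hcomm : ∀ i u, s i * (E s [(c v w : Tok Q τ d)] * u * E s [b b1 hb1, b b2 hb2])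
            = E s [(c v w : Tok Q τ d)] * u * E s [b b1 hb1, b b2 hb2] * s i := by
          intro i u
          have := h.LC hb1 hb2 v w (s i) u 1
          rw [hsym] at this
          simpa [ev, mul_assoc] using this
        have r1 := gapT h s hsym hs3 n IH [c v w] [b b1 hb1, b b2 hb2] k0 (k1 ++ k2.reverse) k3
          (hg.of (by simp [wc, -List.map_reverse]) (by simp [wb, -List.map_reverse]) (by intro i; simp [wl, -List.map_reverse]; try omega))
          (by simp [wb]; omega) (by simp [wl]) (by simp [wl]) (Or.inr ⟨hn, hcomm⟩)
        have r2 := gapT h s hsym hs3 n IH [c v w] [b b1 hb1, b b2 hb2] k0 k1 (k2.reverse ++ k3)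
          (hg.of (by simp [wc, -List.map_reverse]) (by simp [wb, -List.map_reverse]) (by intro i; simp [wl, -List.map_reverse]; try omega))
          (by simp [wb]; omega) (by simp [wl]) (by simp [wl]) (Or.inr ⟨hn, hcomm⟩)
        have r3 := h.T ((k2.reverse.map s).prod) b1 b2 hb1 hb2
        rw [tl, List.reverse_reverse] at r3
        simp only [E_append, E_cons, E_nil, E_l, ev, List.map_append, List.prod_append] at r1 r2 ⊢
        linear_combination (norm := noncomm_ring) (k0.map s).prod * (v * w - w * v) *
          (k1.map s).prod * r3 * (k3.map s).prod - r1 - r2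
  · obtain ⟨k0, b1, hb1, p, rfl, hp, e⟩ := parseB p hp (by omega)
    by_cases p1 : nb p = 0
    · obtain ⟨k1, rfl⟩ := parse0 p p1 hp
      by_cases q0 : nb q = 0
      · obtain ⟨k2, rfl⟩ := parse0 q q0 hq
        have := gapT h s hsym hs3 n IH [b b1 hb1] [c v w] k0 k1 k2 (by simpa using hg)
          (by simp [wb]; omega) (by simp [wl]) (by simp [wl]) (by left; omega)
        simpa using this
      · obtain ⟨k2, b2, hb2, q, rfl, hq, e'⟩ := parseB q hq (by omega)
        obtain ⟨k3, rfl⟩ := parse0 q (by omega) hq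
        have hcomm : ∀ i u, s i * (E s [(c (τ w) (τ v) : Tok Q τ d)] * u * E s [b b1 hb1, b b2 hb2])
            = E s [(c (τ w) (τ v) : Tok Q τ d)] * u * E s [b b1 hb1, b b2 hb2] * s i := by
          intro i u
          have := h.LC hb1 hb2 (τ w) (τ v) (s i) u 1
          rw [hsym] at this
          simpa [ev, mul_assoc] using this
        have hcomm' : ∀ i u, s i * (E s [b b1 hb1, b b2 hb2] * u * E s [(c (τ w) (τ v) : Tok Q τ d)])
            = E s [b b1 hb1, b b2 hb2] * u * E s [(c (τ w) (τ v) : Tok Q τ d)] * s i := by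
          intro i u
          have := h.LC' hb1 hb2 (τ w) (τ v) (s i) u 1
          rw [hsym] at this
          simpa [ev, mul_assoc] using this
        have r1 := gapT h s hsym hs3 n IH [c (τ w) (τ v)] [b b1 hb1, b b2 hb2]
          (k0 ++ k2.reverse) k1.reverse k3
          (hg.of (by simp [wc, -List.map_reverse]) (by simp [wb, -List.map_reverse]) (by intro i; simp [wl, -List.map_reverse]; try omega))
          (by simp [wb]; omega) (by simp [wl]) (by simp [wl]) (Or.inr ⟨hn, hcomm⟩)
        have r2 := gapT h s hsym hs3 n IH [b b1 hb1, b b2 hb2] [c (τ w) (τ v)]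
          k0 k2.reverse (k1.reverse ++ k3)
          (hg.of (by simp [wc, -List.map_reverse]) (by simp [wb, -List.map_reverse]) (by intro i; simp [wl, -List.map_reverse]; try omega))
          (by simp [wb]; omega) (by simp [wl]) (by simp [wl]) (Or.inr ⟨hn, hcomm'⟩)
        have r3 := h.T ((k2.reverse.map s).prod * (τ w * τ v - τ v * τ w) *
          (k1.reverse.map s).prod) b1 b2 hb1 hb2
        rw [h.mul, h.mul, tl, tl, h.comm_tau, h.inv, h.inv, List.reverse_reverse,
          List.reverse_reverse] at r3
        simp only [E_append, E_cons, E_nil, E_l, ev, List.map_append, List.prod_append] at r1 r2 ⊢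
        linear_combination (norm := noncomm_ring) (k0.map s).prod * r3 * (k3.map s).prod - r1 - r2
    · obtain ⟨k1, b2, hb2, p, rfl, hp, e'⟩ := parseB p hp (by omega)
      obtain ⟨k2, rfl⟩ := parse0 p (by omega) hp
      obtain ⟨k3, rfl⟩ := parse0 q (by omega) hq
      have hcomm' : ∀ i u, s i * (E s [b b1 hb1, b b2 hb2] * u * E s [(c v w : Tok Q τ d)])
          = E s [b b1 hb1, b b2 hb2] * u * E s [(c v w : Tok Q τ d)] * s i := by
        intro i u
        have := h.LC' hb1 hb2 v w (s i) u 1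
        rw [hsym] at this
        simpa [ev, mul_assoc] using this
      have r1 := gapT h s hsym hs3 n IH [b b1 hb1, b b2 hb2] [c v w]
        (k0 ++ k1.reverse) k2 k3
        (hg.of (by simp [wc, -List.map_reverse]) (by simp [wb, -List.map_reverse]) (by intro i; simp [wl, -List.map_reverse]; try omega))
        (by simp [wb]; omega) (by simp [wl]) (by simp [wl]) (Or.inr ⟨hn, hcomm'⟩)
      have r2 := gapT h s hsym hs3 n IH [b b1 hb1, b b2 hb2] [c v w]
        k0 (k1.reverse ++ k2) k3
        (hg.of (by simp [wc, -List.map_reverse]) (by simp [wb, -List.map_reverse]) (by intro i; simp [wl, -List.map_reverse]; try omega))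
        (by simp [wb]; omega) (by simp [wl]) (by simp [wl]) (Or.inr ⟨hn, hcomm'⟩)
      have r3 := h.T ((k1.reverse.map s).prod) b1 b2 hb1 hb2
      rw [tl, List.reverse_reverse] at r3
      simp only [E_append, E_cons, E_nil, E_l, ev, List.map_append, List.prod_append] at r1 r2 ⊢
      linear_combination (norm := noncomm_ring) (k0.map s).prod * r3 * (k2.map s).prod *
        (v * w - w * v) * (k3.map s).prod - r1 - r2

end step

theorem main (h : Ctx Q τ) (s : Fin d → Q) (hsym : ∀ i, τ (s i) = s i)
    (hs3 : ∀ i, s i * s i * s i = 0) (t : List (Tok Q τ d)) (hg : Good t) : E s t = 0 := by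
  have a3 : ∀ t : List (Tok Q τ d), 3 ≤ nb t → Good t → E s t = 0 :=
    fun t hb hg => Z3 h s t hg.1 hb
  have a2 := stepT h s hsym hs3 2 (fun t ht => a3 t (by omega)) (by omega)
  have a1 := stepT h s hsym hs3 1 a2 (by omega)
  have a0 := stepT h s hsym hs3 0 a1 (by omega)
  rcases Nat.lt_or_ge (nb t) 3 with hlt | hge
  · interval_cases hh : nb t
    · exact a0 t hh hg
    · exact a1 t hh hg
    · exact a2 t hh hg
  · exact a3 t hge hg

/-- With general letters: `none`-free version where `inr x` is a general letter. -/
theorem main2 (h : Ctx Q τ) (s : Fin d → Q) (hsym : ∀ i, τ (s i) = s i)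
    (hs3 : ∀ i, s i * s i * s i = 0) (γ : Fin d × Bool → Q)
    (hγ : ∀ x, ∃ q, τ q = -q ∧ γ x = s x.1 + q)
    (r : List (Tok Q τ d ⊕ (Fin d × Bool))) : ∀ (p : List (Tok Q τ d)) (T : Finset (Fin d)),
    nc p + (r.map (Sum.elim wc (fun _ => 0))).sum = 1 →
    6 ≤ 2 * (nb p + (r.map (Sum.elim wb (fun _ => 0))).sum) + T.card →
    (∀ i ∈ T, 3 ≤ cl i p + (r.map (Sum.elim (wl i) (fun x => if x = (i, false) then 1 else 0))).sum) →
    E s p * (r.map (Sum.elim (ev s) γ)).prod = 0 := by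
  induction r with
  | nil =>
    intro p T h1 h2 h3
    simp only [List.map_nil, List.sum_nil, add_zero, List.prod_nil, mul_one] at *
    exact main h s hsym hs3 p ⟨h1, T, h2, h3⟩
  | cons x r ih =>
    intro p T h1 h2 h3
    simp only [List.map_cons, List.sum_cons, List.prod_cons] at *
    rcases x with x | x
    · have := ih (p ++ [x]) T (by simpa [add_assoc] using h1) (by simpa [add_assoc] using h2)
        (by intro i hi; simpa [add_assoc] using h3 i hi)
      simpa [mul_assoc] using this
    · obtain ⟨q, hq, e⟩ := hγ x
      have i1 := ih (p ++ [l x.1]) T (by simpa [wc] using h1) (by simpa [wb] using h2)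
        (by
          intro i hi
          have := h3 i hi
          simp only [Sum.elim_inr, cl_append, cl_cons, cl_nil, wl] at this ⊢
          by_cases hx : x = (i, false)
          · simp [hx] at this ⊢; omega
          · simp [hx] at this; omega)
      have i2 := ih (p ++ [b q hq]) (T.erase x.1) (by simpa [wc] using h1) (by
          have e1 := Finset.pred_card_le_card_erase (s := T) (a := x.1)
          simp [wb] at h2 ⊢; omega)
        (by
          intro i hi
          rw [Finset.mem_erase] at hi
          have := h3 i hi.2
          have hx : x ≠ (i, false) := by rintro rfl; exact hi.1 rfl
          simpa [hx, wl] using this)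
      simp only [E_append, E_cons, E_nil, ev, mul_one] at i1 i2
      simp only [Sum.elim_inr, e]
      linear_combination (norm := noncomm_ring) i1 + i2

end Tok

section Part4
variable {F : Type} [Field F] {d : ℕ}

theorem tp_add (a b : FA F d) : tp F d (a + b) = tp F d a + tp F d b := by simp [tp]
theorem tp_mul (a b : FA F d) : tp F d (a * b) = tp F d b * tp F d a := by simp [tp]
theorem tp_sub (a b : FA F d) : tp F d (a - b) = tp F d a - tp F d b := by simp [tp]
theorem tp_zero : tp F d 0 = 0 := by simp [tp]
theorem tp_one : tp F d 1 = 1 := by simp [tp]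
theorem tp_smul (r : F) (a : FA F d) : tp F d (r • a) = r • tp F d a := by simp [tp]
theorem tp_alg (r : F) : tp F d (algebraMap F _ r) = algebraMap F _ r := by
  rw [Algebra.algebraMap_eq_smul_one, tp_smul, tp_one]
theorem tp_iota (x : Ltr d) : tp F d (FreeAlgebra.ι F x) = FreeAlgebra.ι F (x.1, !x.2) := by
  simp [tp]
theorem tp_tp (a : FA F d) : tp F d (tp F d a) = a := by
  induction a using FreeAlgebra.induction with
  | grade0 r => rw [tp_alg, tp_alg]
  | grade1 x => rw [tp_iota, tp_iota]; simp
  | mul a b ha hb => rw [tp_mul, tp_mul, ha, hb]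
  | add a b ha hb => rw [tp_add, tp_add, ha, hb]

theorem wordOf_append (l m : List (Ltr d)) :
    wordOf F d (l ++ m) = wordOf F d l * wordOf F d m := by simp [wordOf]

theorem tp_wordOf (l : List (Ltr d)) :
    tp F d (wordOf F d l) = wordOf F d ((l.map fun x => (x.1, !x.2)).reverse) := by
  induction l with
  | nil => simp [wordOf, tp_one]
  | cons x l ih =>
    have e : wordOf F d (x :: l) = FreeAlgebra.ι F x * wordOf F d l := by simp [wordOf]
    rw [e, tp_mul, ih, tp_iota, List.map_cons, List.reverse_cons, wordOf_append]
    simp [wordOf]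

theorem word_mem {l : List (Ltr d)} (hl : l ≠ []) : wordOf F d l ∈ MFsub F d :=
  Submodule.subset_span ⟨l, hl, rfl⟩

theorem iota_mem (x : Ltr d) : FreeAlgebra.ι F x ∈ MFsub F d := by
  have := word_mem (F := F) (l := [x]) (by simp)
  simpa [wordOf] using this

theorem tp_mem {a : FA F d} (ha : a ∈ MFsub F d) : tp F d a ∈ MFsub F d := by
  unfold MFsub at ha
  induction ha using Submodule.span_induction with
  | mem x hx =>
    obtain ⟨l, hl, rfl⟩ := hx
    rw [tp_wordOf]; exact word_mem (by simpa using hl)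
  | zero => rw [tp_zero]; exact Submodule.zero_mem _
  | add x y _ _ hx hy => rw [tp_add]; exact Submodule.add_mem _ hx hy
  | smul r x _ hx => rw [tp_smul]; exact Submodule.smul_mem _ r hx

theorem MF_mul {a b : FA F d} (ha : a ∈ MFsub F d) (hb : b ∈ MFsub F d) : a * b ∈ MFsub F d := by
  unfold MFsub at ha
  induction ha using Submodule.span_induction with
  | mem x hx =>
    obtain ⟨l, hl, rfl⟩ := hx
    unfold MFsub at hb
    induction hb using Submodule.span_induction with
    | mem y hy =>
      obtain ⟨m, hm, rfl⟩ := hy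
      rw [← wordOf_append]; exact word_mem (by simp [hl])
    | zero => rw [mul_zero]; exact Submodule.zero_mem _
    | add x y _ _ hx hy => rw [mul_add]; exact Submodule.add_mem _ hx hy
    | smul r x _ hx => rw [mul_smul_comm]; exact Submodule.smul_mem _ r hx
  | zero => rw [zero_mul]; exact Submodule.zero_mem _
  | add x y _ _ hx hy => rw [add_mul]; exact Submodule.add_mem _ hx hy
  | smul r x _ hx => rw [smul_mul_assoc]; exact Submodule.smul_mem _ r hx

theorem MF_decomp (a : FA F d) : ∃ (r : F) (m : FA F d), m ∈ MFsub F d ∧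
    a = algebraMap F _ r + m := by
  induction a using FreeAlgebra.induction with
  | grade0 r => exact ⟨r, 0, Submodule.zero_mem _, by simp⟩
  | grade1 x => exact ⟨0, _, iota_mem x, by simp⟩
  | mul a b ha hb =>
    obtain ⟨r, m, hm, rfl⟩ := ha
    obtain ⟨t, k, hk, rfl⟩ := hb
    refine ⟨r * t, r • k + t • m + m * k, ?_, ?_⟩
    · exact Submodule.add_mem _ (Submodule.add_mem _ (Submodule.smul_mem _ _ hk)
        (Submodule.smul_mem _ _ hm)) (MF_mul hm hk)
    · rw [Algebra.smul_def, Algebra.smul_def, map_mul, Algebra.commutes t m]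
      noncomm_ring
  | add a b ha hb =>
    obtain ⟨r, m, hm, rfl⟩ := ha
    obtain ⟨t, k, hk, rfl⟩ := hb
    exact ⟨r + t, m + k, Submodule.add_mem _ hm hk, by rw [map_add]; abel⟩

theorem bar_mem {a : FA F d} (ha : a ∈ MFsub F d) : bar F d a ∈ MFsub F d :=
  Submodule.sub_mem _ ha (tp_mem ha)

theorem tp_bar (a : FA F d) : tp F d (bar F d a) = - bar F d a := by
  unfold bar; rw [tp_sub, tp_tp]; abel

theorem tp_Trel (a b c : FA F d) : tp F d (Trel F d a b c) = Trel F d (tp F d a) c b := by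
  unfold Trel
  simp only [tp_add, tp_mul, tp_bar, tp_tp]
  noncomm_ring

variable (F d) in
/-- The quotient ring. -/
abbrev QQ := (idealA F d).ringCon.Quotient

variable (F d) in
/-- The quotient map. -/
def pq : FA F d →+* QQ F d := (idealA F d).ringCon.mk'

theorem pq_eq_zero {x : FA F d} : pq F d x = 0 ↔ x ∈ idealA F d := by
  rw [← TwoSidedIdeal.mem_ker (pq F d)]
  unfold pq
  rw [TwoSidedIdeal.ker_ringCon_mk']

theorem pq_surj (q : QQ F d) : ∃ a, pq F d a = q := RingCon.mk'_surjective _ q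

theorem cube_zero {a : FA F d} (ha : a ∈ MFsub F d) : pq F d (a ^ 3) = 0 :=
  pq_eq_zero.2 (TwoSidedIdeal.subset_span (Or.inl ⟨a, ha, rfl⟩))

theorem Trel_zero {a b c : FA F d} (ha : a ∈ MFsub F d) (hb : b ∈ MFsub F d)
    (hc : c ∈ MFsub F d) : pq F d (Trel F d a b c) = 0 :=
  pq_eq_zero.2 (TwoSidedIdeal.subset_span (Or.inr ⟨a, ha, b, hb, c, hc, rfl⟩))

variable (F d) in
/-- The transpose followed by the quotient map. -/
def pt : FA F d →+* (QQ F d)ᵐᵒᵖ where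
  toFun x := op (pq F d (tp F d x))
  map_one' := by rw [tp_one, map_one]; rfl
  map_zero' := by rw [tp_zero, map_zero]; rfl
  map_add' x y := by rw [tp_add, map_add]; rfl
  map_mul' x y := by rw [tp_mul, map_mul]; rfl

theorem ideal_le : idealA F d ≤ TwoSidedIdeal.ker (pt F d) := by
  refine TwoSidedIdeal.span_le.2 ?_
  rintro x (⟨a, ha, rfl⟩ | ⟨a, ha, b, hb, c, hc, rfl⟩)
  · rw [SetLike.mem_coe, TwoSidedIdeal.mem_ker]
    change op (pq F d (tp F d (a ^ 3))) = 0
    have : tp F d (a ^ 3) = (tp F d a) ^ 3 := by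
      simp only [pow_succ, pow_zero, one_mul, tp_mul, mul_assoc]
    rw [this, cube_zero (tp_mem ha), op_zero]
  · rw [SetLike.mem_coe, TwoSidedIdeal.mem_ker]
    change op (pq F d (tp F d (Trel F d a b c))) = 0
    rw [tp_Trel, Trel_zero (tp_mem ha) hc hb, op_zero]

theorem tp_congr {x y : FA F d} (hxy : pq F d x = pq F d y) :
    pq F d (tp F d x) = pq F d (tp F d y) := by
  have h0 : x - y ∈ idealA F d := pq_eq_zero.1 (by rw [map_sub, hxy, sub_self])
  have h1 := (TwoSidedIdeal.mem_ker _).1 (ideal_le h0)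
  rw [map_sub, sub_eq_zero] at h1
  exact op_injective h1

variable (F d) in
/-- The induced involution. -/
noncomputable def tauQ (q : QQ F d) : QQ F d := pq F d (tp F d (pq_surj q).choose)

theorem tauQ_pq (a : FA F d) : tauQ F d (pq F d a) = pq F d (tp F d a) :=
  tp_congr (pq_surj (pq F d a)).choose_spec

variable [CharP F 3]

theorem three_FA (a : FA F d) : a + a + a = 0 := by
  have h3 : (3 : F) = 0 := by exact_mod_cast CharP.cast_eq_zero F 3
  have : a + a + a = (3 : F) • a := by
    rw [show (3 : F) = 1 + 1 + 1 by norm_num, add_smul, add_smul, one_smul]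
  rw [this, h3, zero_smul]

theorem N_MF {a b c : FA F d} (ha : a ∈ MFsub F d) (hb : b ∈ MFsub F d) (hc : c ∈ MFsub F d) :
    pq F d (a*b*c + a*c*b + b*a*c + b*c*a + c*a*b + c*b*a) = 0 := by
  have e : a*b*c + a*c*b + b*a*c + b*c*a + c*a*b + c*b*a =
      (a+b+c)^3 - (a+b)^3 - (a+c)^3 - (b+c)^3 + a^3 + b^3 + c^3 := by noncomm_ring
  have hab := Submodule.add_mem _ ha hb
  rw [e]
  simp only [map_add (pq F d), map_sub (pq F d)]
  rw [cube_zero ha, cube_zero hb, cube_zero hc, cube_zero hab,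
    cube_zero (Submodule.add_mem _ ha hc), cube_zero (Submodule.add_mem _ hb hc),
    cube_zero (Submodule.add_mem _ hab hc)]
  simp

theorem N_FA (a b c : FA F d) :
    pq F d (a*b*c + a*c*b + b*a*c + b*c*a + c*a*b + c*b*a) = 0 := by
  obtain ⟨r, a, ha, rfl⟩ := MF_decomp a
  obtain ⟨t, b, hb, rfl⟩ := MF_decomp b
  obtain ⟨k, c, hc, rfl⟩ := MF_decomp c
  rw [← N_MF ha hb hc]
  congr 1
  generalize hR : algebraMap F (FA F d) r = R
  generalize hT : algebraMap F (FA F d) t = T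
  generalize hK : algebraMap F (FA F d) k = K
  have c1 : ∀ x, x * R = R * x := fun x => by rw [← hR]; exact (Algebra.commutes r x).symm
  have c2 : ∀ x, x * T = T * x := fun x => by rw [← hT]; exact (Algebra.commutes t x).symm
  have c3 : ∀ x, x * K = K * x := fun x => by rw [← hK]; exact (Algebra.commutes k x).symm
  have key : ∀ X Y Z : FA F d, (∀ x, x * X = X * x) →
      X*Y*Z + X*Z*Y + Y*X*Z + Y*Z*X + Z*X*Y + Z*Y*X = 0 := by
    intro X Y Z hX
    rw [hX Y, hX Z, hX (Y*Z), hX (Z*Y), ← three_FA (X * (Y*Z) + X * (Z * Y))]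
    noncomm_ring
  have k1 := key R (T + b) (K + c) c1
  have k2 := key T a (K + c) c2
  have k3 := key K a b c3
  linear_combination (norm := noncomm_ring) k1 + k2 + k3

theorem T_FA (a b c : FA F d) : pq F d (Trel F d a b c) = 0 := by
  obtain ⟨r, a, ha, rfl⟩ := MF_decomp a
  obtain ⟨t, b, hb, rfl⟩ := MF_decomp b
  obtain ⟨k, c, hc, rfl⟩ := MF_decomp c
  have hbar : ∀ (r : F) (x : FA F d), bar F d (algebraMap F _ r + x) = bar F d x := by
    intro r x; unfold bar; rw [tp_add, tp_alg]; abel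
  rw [← Trel_zero ha hb hc]
  congr 1
  unfold Trel
  rw [hbar, hbar, tp_add, tp_alg]
  have e := three_FA (algebraMap F (FA F d) r * bar F d b * bar F d c)
  have e1 := Algebra.commutes r (bar F d b)
  have e2 := Algebra.commutes r (bar F d b * bar F d c)
  linear_combination (norm := noncomm_ring) e - e1 * bar F d c - e2

theorem ctxQ : Ctx (QQ F d) (tauQ F d) where
  add x y := by
    obtain ⟨a, rfl⟩ := pq_surj x
    obtain ⟨b, rfl⟩ := pq_surj y
    rw [← map_add, tauQ_pq, tauQ_pq, tauQ_pq, tp_add, map_add]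
  mul x y := by
    obtain ⟨a, rfl⟩ := pq_surj x
    obtain ⟨b, rfl⟩ := pq_surj y
    rw [← map_mul, tauQ_pq, tauQ_pq, tauQ_pq, tp_mul, map_mul]
  inv x := by
    obtain ⟨a, rfl⟩ := pq_surj x
    rw [tauQ_pq, tauQ_pq, tp_tp]
  three x := by
    obtain ⟨a, rfl⟩ := pq_surj x
    rw [← map_add, ← map_add, three_FA, map_zero]
  N x y z := by
    obtain ⟨a, rfl⟩ := pq_surj x
    obtain ⟨b, rfl⟩ := pq_surj y
    obtain ⟨c, rfl⟩ := pq_surj z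
    have := N_FA a b c
    simpa only [map_add, map_mul] using this
  T x y z hy hz := by
    obtain ⟨a, rfl⟩ := pq_surj x
    have key : ∀ y : QQ F d, tauQ F d y = -y → ∃ b, pq F d (bar F d b) = y := by
      intro y hy
      obtain ⟨b, rfl⟩ := pq_surj y
      refine ⟨-b, ?_⟩
      rw [tauQ_pq] at hy
      have e : tp F d (-b) = - tp F d b := by simp [tp]
      unfold bar
      rw [e, map_sub, map_neg, map_neg, hy]
      have := congrArg (pq F d) (three_FA b)
      rw [map_add, map_add, map_zero] at this
      linear_combination (norm := noncomm_ring) - this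
    obtain ⟨b, rfl⟩ := key y hy
    obtain ⟨c, rfl⟩ := key z hz
    rw [tauQ_pq]
    have := T_FA a b c
    unfold Trel at this
    simpa only [map_add, map_mul] using this

variable (F d) in
/-- Symmetric parts of the letters. -/
noncomputable def sQ (i : Fin d) : QQ F d :=
  pq F d (-(FreeAlgebra.ι F (i, false) + FreeAlgebra.ι F (i, true)))

omit [CharP F 3] in
theorem sQ_sym (i : Fin d) : tauQ F d (sQ F d i) = sQ F d i := by
  unfold sQ
  rw [tauQ_pq]
  congr 1
  have e : ∀ b : FA F d, tp F d (-b) = - tp F d b := fun b => by simp [tp]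
  rw [e, tp_add, tp_iota, tp_iota]
  simp [add_comm]

omit [CharP F 3] in
theorem sQ_cube (i : Fin d) : sQ F d i * sQ F d i * sQ F d i = 0 := by
  unfold sQ
  rw [← map_mul, ← map_mul, ← cube_zero (Submodule.neg_mem _ (Submodule.add_mem _
    (iota_mem (F := F) (i, false)) (iota_mem (i, true))))]
  congr 1
  noncomm_ring

theorem gQ (x : Fin d × Bool) : ∃ q, tauQ F d q = -q ∧
    pq F d (FreeAlgebra.ι F x) = sQ F d x.1 + q := by
  obtain ⟨i, e⟩ := x
  have e0 : tp F d (FreeAlgebra.ι F (i, false)) = FreeAlgebra.ι F (i, true) := by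
    rw [tp_iota]; rfl
  have e1 : tp F d (FreeAlgebra.ι F (i, true)) = FreeAlgebra.ι F (i, false) := by
    rw [tp_iota]; rfl
  have hn : ∀ b : FA F d, tp F d (-b) = - tp F d b := fun b => by simp [tp]
  cases e
  · refine ⟨pq F d (-bar F d (FreeAlgebra.ι F (i, false))), ?_, ?_⟩
    · rw [tauQ_pq, hn, tp_bar, map_neg, map_neg]
    · unfold sQ
      rw [← map_add]; congr 1; unfold bar; rw [e0]
      linear_combination (norm := noncomm_ring) three_FA (FreeAlgebra.ι F ((i, false) : Ltr d))
  · refine ⟨pq F d (-bar F d (FreeAlgebra.ι F (i, true))), ?_, ?_⟩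
    · rw [tauQ_pq, hn, tp_bar, map_neg, map_neg]
    · unfold sQ
      rw [← map_add]; congr 1; unfold bar; rw [e1]
      linear_combination (norm := noncomm_ring) three_FA (FreeAlgebra.ι F ((i, true) : Ltr d))

theorem barQ (a : FA F d) : tauQ F d (pq F d (bar F d a)) = - pq F d (bar F d a) := by
  rw [tauQ_pq, tp_bar, map_neg]

end Part4

/-- Evaluation of a token list. -/
noncomputable def evQ {F : Type} [Field F] {d : ℕ}
    (r : List (Tok (QQ F d) (tauQ F d) d ⊕ (Fin d × Bool))) : QQ F d :=
  (r.map (Sum.elim (Tok.ev (sQ F d)) (fun x => pq F d (FreeAlgebra.ι F x)))).prod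

theorem evQ_flatten {F : Type} [Field F] {d : ℕ}
    (R : List (List (Tok (QQ F d) (tauQ F d) d ⊕ (Fin d × Bool)))) :
    evQ R.flatten = (R.map evQ).prod := by
  induction R with
  | nil => simp [evQ]
  | cons r R ih =>
    rw [List.map_cons, List.prod_cons, ← ih, List.flatten_cons]
    simp [evQ]

theorem evQ_word {F : Type} [Field F] {d : ℕ} (l : List (Ltr d)) :
    evQ (l.map Sum.inr) = pq F d (wordOf F d l) := by
  simp [evQ, wordOf, map_list_prod, Function.comp_def]

theorem stmt12 (F : Type) [Field F] [Infinite F] [CharP F 3] (d : ℕ) (s : ℕ)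
    (hs1 : 1 ≤ s) (hs : s ≤ 4)
    (idx : Fin (8 - 2 * s) → Fin d) (hidx : Function.Injective idx)
    (a : Fin (s - 1) → List (Ltr d)) (ha : ∀ i, a i ≠ [])
    (v w : List (Ltr d)) (hv : v ≠ []) (hw : w ≠ [])
    (u : Fin (s + 1) → List (Ltr d))
    (hdeg : ∀ i : Fin (8 - 2 * s),
      (∑ j : Fin (s + 1), (u j).count ((idx i, false) : Ltr d)) = 3)
    (L : List (FA F d))
    (hL : L.Perm ((wordOf F d v * wordOf F d w - wordOf F d w * wordOf F d v) ::
      ((List.ofFn fun i : Fin (s - 1) => bar F d (wordOf F d (a i))) ++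
       List.ofFn fun j : Fin (s + 1) => wordOf F d (u j)))) :
    L.prod ∈ idealA F d := by
  classical
  rw [← pq_eq_zero, map_list_prod]
  let LL : List (List (Tok (QQ F d) (tauQ F d) d ⊕ (Fin d × Bool))) :=
    [Sum.inl (Tok.c (pq F d (wordOf F d v)) (pq F d (wordOf F d w)))] ::
      ((List.ofFn fun i : Fin (s - 1) =>
          [Sum.inl (Tok.b (pq F d (bar F d (wordOf F d (a i)))) (barQ _))]) ++
       List.ofFn fun j : Fin (s + 1) => (u j).map Sum.inr)
  have h1 : (L.map (pq F d)).Perm (LL.map evQ) := by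
    refine (hL.map _).trans (List.Perm.of_eq ?_)
    simp only [LL, List.map_cons, List.map_append, List.map_ofFn, Function.comp_def, evQ_word]
    simp [evQ, Tok.ev]
  have h2 : ∃ R, L.map (pq F d) = List.map evQ R ∧ R.Perm LL := by
    have := List.eq_map_comp_perm (evQ (F := F) (d := d))
    have e := congrFun (congrFun this (L.map (pq F d))) LL
    exact e.mpr h1
  obtain ⟨R, hR, hp⟩ := h2
  have hf := hp.flatten
  rw [hR, ← evQ_flatten]
  have := Tok.main2 ctxQ (sQ F d) sQ_sym sQ_cube (fun x => pq F d (FreeAlgebra.ι F x)) gQ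
    R.flatten [] (Finset.univ.image idx) ?_ ?_ ?_
  · simpa [evQ, Tok.E] using this
  · rw [(hf.map _).sum_eq]
    simp [LL, Tok.nc, Tok.wc, Function.comp_def, List.sum_flatten]
  · rw [(hf.map _).sum_eq, Finset.card_image_of_injective _ hidx]
    simp [LL, Tok.nb, Tok.wb, Function.comp_def, List.sum_flatten]
    omega
  · intro i hi
    obtain ⟨j, -, rfl⟩ := Finset.mem_image.1 hi
    rw [(hf.map _).sum_eq, ← hdeg j]
    have cnt : ∀ (x : Fin d × Bool) (l : List (Fin d × Bool)),
        (l.map fun y => if y = x then 1 else 0).sum = l.count x := by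
      intro x l
      induction l with
      | nil => simp
      | cons y l ih =>
        rw [List.map_cons, List.sum_cons, ih, List.count_cons, add_comm]
        simp
    simp [LL, Tok.cl, Tok.wl, Function.comp_def, List.sum_flatten, cnt, List.sum_ofFn,
      Fin.sum_univ_succ]
end

section
/- Let F be an infinite field with char(F) ≠ 2 and let X = X_1 be a generic 3×3 matrix with X̄ = X − Xᵀ. Then the invariant tr(X² X̄² X X̄) ∈ R^{O(3)} is indecomposable, i.e., it does not lie in the square of the ideal of R^{O(3)} generated by all homogeneous invariants of positive degree. -/
open Matrix MvPolynomial

/-- The polynomial ring `R = F[x_{ij}(k)]`, `1 ≤ i,j ≤ 3`, `1 ≤ k ≤ d`. -/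
abbrev Rpoly (F : Type) [Field F] (d : ℕ) := MvPolynomial (Fin 3 × Fin 3 × Fin d) F

variable (F : Type) [Field F] (d : ℕ)

/-- The `k`-th generic 3×3 matrix `X_k`. -/
noncomputable def genMat (k : Fin d) : Matrix (Fin 3) (Fin 3) (Rpoly F d) :=
  Matrix.of fun i j => MvPolynomial.X (i, j, k)

/-- The action of `g` on `R` by simultaneous conjugation: entries of `X_k` are replaced
by the entries of `gᵀ X_k g`. -/
noncomputable def actHom (g : Matrix (Fin 3) (Fin 3) F) : Rpoly F d →ₐ[F] Rpoly F d :=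
  MvPolynomial.aeval fun p : Fin 3 × Fin 3 × Fin d =>
    ((g.map (algebraMap F (Rpoly F d)))ᵀ * genMat F d p.2.2 *
      g.map (algebraMap F (Rpoly F d))) p.1 p.2.1

/-- The algebra `R^{O(3)}` of invariants of the orthogonal group. -/
noncomputable def invAlg : Subalgebra F (Rpoly F d) where
  carrier := {f | ∀ g : Matrix (Fin 3) (Fin 3) F, gᵀ * g = 1 → actHom F d g f = f}
  mul_mem' := by
    intro a b ha hb g hg
    rw [_root_.map_mul, ha g hg, hb g hg]
  add_mem' := by
    intro a b ha hb g hg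
    rw [_root_.map_add, ha g hg, hb g hg]
  one_mem' := by
    intro g hg
    exact map_one _
  algebraMap_mem' := by
    intro r g hg
    exact (actHom F d g).commutes r

/-- The ideal of `R^{O(3)}` generated by all homogeneous invariants of positive degree. -/
noncomputable def plusIdeal : Ideal (invAlg F d) :=
  Ideal.span {f | ∃ n : ℕ, 0 < n ∧ MvPolynomial.IsHomogeneous (f : Rpoly F d) n}

/-- The set of decomposable invariants: elements of `R^{O(3)}` lying in the square of the
ideal generated by all homogeneous invariants of positive degree. -/
noncomputable def decompSet : Set (Rpoly F d) :=
  Subtype.val '' ((plusIdeal F d ^ 2 : Ideal (invAlg F d)) : Set (invAlg F d))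


section Helpers

/-- The slice matrix. -/
noncomputable def slM (F : Type) [Field F] : Matrix (Fin 3) (Fin 3) (MvPolynomial (Fin 6) F) :=
  !![X 0, X 5, -X 4; -X 5, X 1, X 3; X 4, -X 3, X 2]

noncomputable def slHom (F : Type) [Field F] (d : ℕ) : Rpoly F d →ₐ[F] MvPolynomial (Fin 6) F :=
  MvPolynomial.aeval fun p => if p.2.2.val = 0 then slM F p.1 p.2.1 else 0

noncomputable def sgHom {F : Type} [Field F] (c : Fin 6 → F) (σ : Equiv.Perm (Fin 6)) :
    MvPolynomial (Fin 6) F →ₐ[F] MvPolynomial (Fin 6) F :=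
  MvPolynomial.aeval fun i => C (c i) * X (σ i)

lemma sgHom_monomial {F : Type} [Field F] (c : Fin 6 → F) (σ : Equiv.Perm (Fin 6))
    (m : Fin 6 →₀ ℕ) (r : F) :
    sgHom c σ (monomial m r) = monomial (m.mapDomain σ) (r * ∏ i, c i ^ m i) := by
  have h : sgHom c σ (monomial m r)
      = C (r * ∏ i, c i ^ m i) * rename σ (monomial m (1 : F)) := by
    rw [monomial_eq, monomial_eq]
    simp only [Finsupp.prod_fintype, pow_zero, implies_true, _root_.map_mul, map_prod, map_pow,
      rename_X, sgHom, aeval_X, aeval_C, mul_pow, Finset.prod_mul_distrib, map_one, one_mul,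
      algebraMap_eq]
    ring
  rw [h, rename_monomial, C_mul_monomial, mul_one]

lemma coeff_sgHom {F : Type} [Field F] (c : Fin 6 → F) (σ : Equiv.Perm (Fin 6))
    (f : MvPolynomial (Fin 6) F) (m : Fin 6 →₀ ℕ) :
    coeff (m.mapDomain σ) (sgHom c σ f) = (∏ i, c i ^ m i) * coeff m f := by
  induction f using MvPolynomial.monomial_add_induction_on with
  | C a =>
    rw [← monomial_zero', sgHom_monomial, coeff_monomial, coeff_monomial]
    by_cases h : 0 = m
    · subst h; simp
    · rw [if_neg h, if_neg, mul_zero]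
      intro h'
      exact h (Finsupp.mapDomain_injective σ.injective h')
  | monomial_add a b f _ _ ih =>
    rw [_root_.map_add, coeff_add, coeff_add, ih, sgHom_monomial, coeff_monomial, coeff_monomial]
    by_cases h : a = m
    · subst h; simp; ring
    · rw [if_neg h, if_neg]
      · ring
      intro h'
      exact h (Finsupp.mapDomain_injective σ.injective h')

/-- If the slice action of `g` is given by `c, σ`, the restricted invariants are fixed. -/
lemma slice_fix {F : Type} [Field F] {d : ℕ} (g : Matrix (Fin 3) (Fin 3) F) (hg : gᵀ * g = 1)
    (c : Fin 6 → F) (σ : Equiv.Perm (Fin 6))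
    (hc : (g.map C)ᵀ * slM F * g.map C = (slM F).map (sgHom c σ))
    (p : Rpoly F d) (hp : p ∈ invAlg F d) : sgHom c σ (slHom F d p) = slHom F d p := by
  have key : (slHom F d).comp (actHom F d g) = (sgHom c σ).comp (slHom F d) := by
    apply MvPolynomial.algHom_ext
    rintro ⟨i, j, k⟩
    have h1 := congrFun (congrFun hc i) j
    by_cases hk : k.val = 0
    · simp only [AlgHom.comp_apply, actHom, aeval_X, slHom, hk, if_true]
      simp only [Matrix.map_apply] at h1
      rw [← h1]
      simp [Matrix.mul_apply, genMat, hk, algebraMap_eq]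
    · simp [AlgHom.comp_apply, actHom, slHom, hk, Matrix.mul_apply, genMat]
  have := DFunLike.congr_fun key p
  simp only [AlgHom.comp_apply] at this
  rw [← this, hp g hg]

lemma coeff_zero_of {F : Type} [Field F] (h2 : (2 : F) ≠ 0) {f : MvPolynomial (Fin 6) F}
    (c : Fin 6 → F) (σ : Equiv.Perm (Fin 6)) (hf : sgHom c σ f = f) (m : Fin 6 →₀ ℕ)
    (hm : ∀ i, m (σ i) = m i) (hc : ∏ i, c i ^ m i = -1) : coeff m f = 0 := by
  have h := coeff_sgHom c σ f m
  have hm' : m.mapDomain σ = m := by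
    ext i
    obtain ⟨j, rfl⟩ := σ.surjective i
    rw [Finsupp.mapDomain_apply σ.injective, hm]
  rw [hm', hf, hc] at h
  have : (2 : F) * coeff m f = 0 := by linear_combination h
  exact (mul_eq_zero.mp this).resolve_left h2

lemma fixes {F : Type} [Field F] {d : ℕ} (p : Rpoly F d) (hp : p ∈ invAlg F d) :
    sgHom (F := F) ![1,1,1,1,-1,-1] 1 (slHom F d p) = slHom F d p ∧
    sgHom (F := F) ![1,1,1,-1,-1,1] 1 (slHom F d p) = slHom F d p ∧
    sgHom (F := F) ![1,1,1,-1,-1,-1] (Equiv.swap 0 1 * Equiv.swap 3 4) (slHom F d p) = slHom F d p ∧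
    sgHom (F := F) ![1,1,1,-1,-1,-1] (Equiv.swap 0 2 * Equiv.swap 3 5) (slHom F d p) = slHom F d p ∧
    sgHom (F := F) ![1,1,1,-1,-1,-1] (Equiv.swap 1 2 * Equiv.swap 4 5) (slHom F d p) = slHom F d p := by
  refine ⟨slice_fix !![1,0,0;0,-1,0;0,0,-1] ?_ _ _ ?_ p hp,
    slice_fix !![1,0,0;0,1,0;0,0,-1] ?_ _ _ ?_ p hp,
    slice_fix !![0,1,0;1,0,0;0,0,1] ?_ _ _ ?_ p hp,
    slice_fix !![0,0,1;0,1,0;1,0,0] ?_ _ _ ?_ p hp,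
    slice_fix !![1,0,0;0,0,1;0,1,0] ?_ _ _ ?_ p hp⟩
  all_goals
    ext i j : 2
    fin_cases i <;> fin_cases j <;>
      simp [slM, sgHom, Matrix.mul_apply, Fin.sum_univ_three, Equiv.swap_apply_def]

/-- The key monomial. -/
noncomputable def km : Fin 6 →₀ ℕ := Finsupp.equivFunOnFinite.symm ![2,1,0,1,1,1]

lemma half {F : Type} [Field F] (h2 : (2 : F) ≠ 0) {d : ℕ} (p : Rpoly F d)
    (hp : p ∈ invAlg F d) (u : Fin 6 →₀ ℕ) (h0 : u 0 ≤ 2) (h1 : u 1 ≤ 1) (h22 : u 2 = 0)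
    (h3 : u 3 ≤ 1) (h4 : u 4 ≤ 1) (h5 : u 5 ≤ 1) (hu : coeff u (slHom F d p) ≠ 0) :
    (u 3 = 0 ∧ u 4 = 0 ∧ u 5 = 0) ∨
    (u 0 = 2 ∧ u 1 = 1 ∧ u 3 = 1 ∧ u 4 = 1 ∧ u 5 = 1) := by
  obtain ⟨f1, f2, f3, f4, f5⟩ := fixes p hp
  have e1 := mt (coeff_zero_of h2 _ _ f1 u (by simp)) hu
  have e2 := mt (coeff_zero_of h2 _ _ f2 u (by simp)) hu
  have e3 := fun h => mt (coeff_zero_of h2 _ _ f3 u h) hu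
  have e4 := fun h => mt (coeff_zero_of h2 _ _ f4 u h) hu
  have e5 := fun h => mt (coeff_zero_of h2 _ _ f5 u h) hu
  simp only [Fin.prod_univ_six, Fin.forall_fin_succ] at e1 e2 e3 e4 e5
  simp [Equiv.swap_apply_def] at e1 e2 e3 e4 e5
  generalize u 0 = a0 at *
  generalize u 1 = a1 at *
  generalize u 2 = a2 at *
  generalize u 3 = a3 at *
  generalize u 4 = a4 at *
  generalize u 5 = a5 at *
  subst h22
  interval_cases a3 <;> interval_cases a4 <;> interval_cases a5 <;> simp_all
  interval_cases a0 <;> interval_cases a1 <;> simp_all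

lemma coeff_mul_zero {F : Type} [Field F] (h2 : (2 : F) ≠ 0) {d : ℕ} (p q : Rpoly F d)
    (hp : p ∈ invAlg F d) (hq : q ∈ invAlg F d) (hp0 : coeff 0 (slHom F d p) = 0)
    (hq0 : coeff 0 (slHom F d q) = 0) : coeff km (slHom F d (p * q)) = 0 := by
  rw [_root_.map_mul, coeff_mul]
  apply Finset.sum_eq_zero
  rintro ⟨u, v⟩ huv
  rw [Finset.HasAntidiagonal.mem_antidiagonal] at huv
  have H : ∀ i, u i + v i = (![2,1,0,1,1,1] : Fin 6 → ℕ) i := fun i => by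
    have := DFunLike.congr_fun huv i
    simpa [km] using this
  have H0 := H 0
  have H1 := H 1
  have H2 := H 2
  have H3 := H 3
  have H4 := H 4
  have H5 := H 5
  simp at H0 H1 H2 H3 H4 H5
  by_contra hne
  obtain ⟨hu, hv⟩ := mul_ne_zero_iff.mp hne
  have au := half h2 p hp u (by omega) (by omega) (by omega) (by omega) (by omega) (by omega) hu
  have av := half h2 q hq v (by omega) (by omega) (by omega) (by omega) (by omega) (by omega) hv
  have hu0 : u ≠ 0 := by rintro rfl; exact hu hp0
  have hv0 : v ≠ 0 := by rintro rfl; exact hv hq0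
  rcases au with au | au
  · rcases av with av | av
    · omega
    · apply hu0
      ext i
      fin_cases i <;> simp <;> omega
  · apply hv0
    ext i
    fin_cases i <;> simp <;> omega

lemma plus_coeff {F : Type} [Field F] {d : ℕ} (p : invAlg F d) (hp : p ∈ plusIdeal F d) :
    coeff 0 (slHom F d (p : Rpoly F d)) = 0 := by
  let φ : invAlg F d →+* F :=
    (constantCoeff.comp (slHom F d).toRingHom).comp (invAlg F d).val.toRingHom
  have hle : plusIdeal F d ≤ RingHom.ker φ := by
    apply Ideal.span_le.mpr
    rintro f ⟨n, hn, hf⟩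
    have hz : constantCoeff (f : Rpoly F d) = 0 := by
      by_contra h
      have := hf h
      simp at this
      omega
    have hc : ((constantCoeff.comp (slHom F d).toRingHom : Rpoly F d →+* F)) = constantCoeff := by
      apply MvPolynomial.ringHom_ext
      · intro r; simp [slHom]
      · rintro ⟨i, j, k⟩
        simp [slHom]
        split_ifs
        swap
        · simp
        fin_cases i <;> fin_cases j <;> simp [slM]
    have := RingHom.congr_fun hc (f : Rpoly F d)
    rw [hz] at this
    exact this
  exact hle hp

lemma slHom_gen {F : Type} [Field F] {d : ℕ} (hd : 1 ≤ d) :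
    (genMat F d ⟨0, hd⟩).map (slHom F d) = slM F := by
  ext i j : 2
  simp [genMat, slHom]

lemma tr_id {R : Type} [CommRing R] (s t u a b c : R) (M N : Matrix (Fin 3) (Fin 3) R)
    (hM : M = !![s, c, -b; -c, t, a; b, -a, u]) (hN : N = !![s, -c, b; c, t, -a; -b, a, u]) :
    (M ^ 2 * (M - Mᵀ) ^ 2 * M * (M - Mᵀ)).trace - (N ^ 2 * (N - Nᵀ) ^ 2 * N * (N - Nᵀ)).trace
      = -16 * (a * b * c * (s ^ 2 * t - s * t ^ 2 + t ^ 2 * u - t * u ^ 2 + s * u ^ 2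
        - s ^ 2 * u)) := by
  have h1 : M - Mᵀ = !![0, 2 * c, -2 * b; -2 * c, 0, 2 * a; 2 * b, -2 * a, 0] := by
    subst hM
    ext i j
    fin_cases i <;> fin_cases j <;> simp <;> ring
  have h2 : N - Nᵀ = !![0, -2 * c, 2 * b; 2 * c, 0, -2 * a; -2 * b, 2 * a, 0] := by
    subst hN
    ext i j
    fin_cases i <;> fin_cases j <;> simp <;> ring
  rw [h1, h2, hM, hN]
  simp only [pow_two, Matrix.mul_fin_three, Matrix.trace_fin_three_of]
  ring

lemma main_coeff {F : Type} [Field F] (h2 : (2 : F) ≠ 0) :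
    coeff km (Matrix.trace ((slM F) ^ 2 * (slM F - (slM F)ᵀ) ^ 2 * slM F * (slM F - (slM F)ᵀ)))
      ≠ 0 := by
  set T := Matrix.trace ((slM F) ^ 2 * (slM F - (slM F)ᵀ) ^ 2 * slM F * (slM F - (slM F)ᵀ)) with hT
  have mono : ∀ a b c : ℕ, (X 0 ^ a * X 1 ^ b * X 2 ^ c * X 3 * X 4 * X 5 : MvPolynomial (Fin 6) F)
      = monomial (Finsupp.equivFunOnFinite.symm ![a,b,c,1,1,1]) 1 := by
    intro a b c
    rw [monomial_eq]
    simp [Finsupp.prod_fintype, Fin.prod_univ_six]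
  have hodd : T - sgHom (F := F) ![1,1,1,-1,-1,-1] 1 T = C (-16 : F) *
      ((X 0 ^ 2 * X 1 ^ 1 * X 2 ^ 0 * X 3 * X 4 * X 5)
      - (X 0 ^ 1 * X 1 ^ 2 * X 2 ^ 0 * X 3 * X 4 * X 5)
      + (X 0 ^ 0 * X 1 ^ 2 * X 2 ^ 1 * X 3 * X 4 * X 5)
      - (X 0 ^ 0 * X 1 ^ 1 * X 2 ^ 2 * X 3 * X 4 * X 5)
      + (X 0 ^ 1 * X 1 ^ 0 * X 2 ^ 2 * X 3 * X 4 * X 5)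
      - (X 0 ^ 2 * X 1 ^ 0 * X 2 ^ 1 * X 3 * X 4 * X 5)) := by
    have hs : (sgHom (F := F) ![1,1,1,-1,-1,-1] 1).mapMatrix (slM F)
        = !![X 0, -X 5, X 4; X 5, X 1, -X 3; -X 4, X 3, X 2] := by
      ext i j : 2
      fin_cases i <;> fin_cases j <;> simp [slM, sgHom]
    have hst : (sgHom (F := F) ![1,1,1,-1,-1,-1] 1).mapMatrix (slM F)ᵀ
        = (!![X 0, -X 5, X 4; X 5, X 1, -X 3; -X 4, X 3, X 2])ᵀ := by
      rw [← hs]; ext i j : 2; simp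
    have htr : ∀ M : Matrix (Fin 3) (Fin 3) (MvPolynomial (Fin 6) F),
        sgHom (F := F) ![1,1,1,-1,-1,-1] 1 M.trace
          = ((sgHom (F := F) ![1,1,1,-1,-1,-1] 1).mapMatrix M).trace := by
      intro M; simp [Matrix.trace]
    rw [hT, htr]
    simp only [_root_.map_mul, map_pow, map_sub, hs, hst]
    rw [tr_id (X 0) (X 1) (X 2) (X 3) (X 4) (X 5) (slM F) _ rfl rfl]
    have : (C (-16 : F) : MvPolynomial (Fin 6) F) = -16 := by
      rw [map_neg]; exact congrArg Neg.neg (map_ofNat C 16)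
    rw [this]
    ring
  have hc := congrArg (coeff km) hodd
  have h1 := coeff_sgHom (F := F) ![1,1,1,-1,-1,-1] 1 T km
  have hkm : km.mapDomain (1 : Equiv.Perm (Fin 6)) = km := by
    simp [Equiv.Perm.coe_one, Finsupp.mapDomain_id]
  rw [hkm] at h1
  rw [coeff_sub, h1] at hc
  simp only [mono, coeff_C_mul, coeff_sub, coeff_add, coeff_monomial, km,
    EmbeddingLike.apply_eq_iff_eq] at hc
  simp [Fin.prod_univ_six] at hc
  intro h0
  have h16 : (16 : F) ≠ 0 := by
    have : (16 : F) = 2 ^ 4 := by norm_num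
    rw [this]; exact pow_ne_zero _ h2
  apply h16
  simp only [km] at h0
  rw [h0] at hc
  linear_combination hc

lemma main_inv {F : Type} [Field F] {d : ℕ} (k : Fin d) (X : Matrix (Fin 3) (Fin 3) (Rpoly F d))
    (hX : X = genMat F d k) :
    Matrix.trace (X ^ 2 * (X - Xᵀ) ^ 2 * X * (X - Xᵀ)) ∈ invAlg F d := by
  intro g hg
  set G := g.map (algebraMap F (Rpoly F d)) with hG
  have hGG : Gᵀ * G = 1 := by
    rw [hG, ← Matrix.transpose_map, ← Matrix.map_mul, hg]
    exact Matrix.map_one _ (map_zero _) (map_one _)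
  have hGG' : G * Gᵀ = 1 := mul_eq_one_comm.mp hGG
  have hXm : (actHom F d g).mapMatrix X = Gᵀ * X * G := by
    subst hX
    ext i j : 2
    simp [genMat, actHom, hG]
  have hXt : (actHom F d g).mapMatrix Xᵀ = Gᵀ * Xᵀ * G := by
    have : (actHom F d g).mapMatrix Xᵀ = ((actHom F d g).mapMatrix X)ᵀ := by
      ext i j : 2
      simp
    rw [this, hXm]
    simp [Matrix.transpose_mul, Matrix.mul_assoc]
  have htr : ∀ M : Matrix (Fin 3) (Fin 3) (Rpoly F d),
      actHom F d g M.trace = ((actHom F d g).mapMatrix M).trace := by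
    intro M; simp [Matrix.trace]
  have hmul : ∀ A B : Matrix (Fin 3) (Fin 3) (Rpoly F d),
      (Gᵀ * A * G) * (Gᵀ * B * G) = Gᵀ * (A * B) * G := by
    intro A B
    calc (Gᵀ * A * G) * (Gᵀ * B * G) = Gᵀ * A * (G * Gᵀ) * B * G := by noncomm_ring
      _ = _ := by rw [hGG']; noncomm_ring
  have hsub : Gᵀ * X * G - Gᵀ * Xᵀ * G = Gᵀ * (X - Xᵀ) * G := by noncomm_ring
  rw [htr]
  simp only [_root_.map_mul, map_pow, map_sub, hXm, hXt, hsub, pow_two, hmul]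
  rw [Matrix.trace_mul_comm, ← Matrix.mul_assoc, hGG', Matrix.one_mul]

end Helpers

/-- the invariant `tr(X² X̄² X X̄)`, where `X = X_1` and `X̄ = X - Xᵀ`,
is an indecomposable `O(3)`-invariant. -/
theorem stmt14 (F : Type) [Field F] [Infinite F] (h2 : ringChar F ≠ 2) (d : ℕ) (hd : 1 ≤ d)
    (X : Matrix (Fin 3) (Fin 3) (Rpoly F d)) (hX : X = genMat F d ⟨0, hd⟩) :
    Matrix.trace (X ^ 2 * (X - Xᵀ) ^ 2 * X * (X - Xᵀ)) ∈ invAlg F d ∧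
    Matrix.trace (X ^ 2 * (X - Xᵀ) ^ 2 * X * (X - Xᵀ)) ∉ decompSet F d := by
  refine ⟨main_inv _ X hX, ?_⟩
  have h2' : (2 : F) ≠ 0 := Ring.two_ne_zero h2
  rintro ⟨f, hf, hfT⟩
  have hz : coeff km (slHom F d (f : Rpoly F d)) = 0 := by
    have hf' : f ∈ plusIdeal F d * plusIdeal F d := by
      rw [← pow_two]; exact hf
    refine Submodule.mul_induction_on hf' ?_ ?_
    · intro p hp q hq
      exact coeff_mul_zero h2' _ _ p.2 q.2 (plus_coeff p hp) (plus_coeff q hq)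
    · intro a b ha hb
      simp [ha, hb]
  rw [hfT] at hz
  apply main_coeff h2'
  rw [← hz]
  have h1 : (slHom F d).mapMatrix X = slM F := by
    subst hX; exact slHom_gen hd
  have h1t : (slHom F d).mapMatrix Xᵀ = (slM F)ᵀ := by
    rw [← h1]; ext i j : 2; simp
  have htr : ∀ M : Matrix (Fin 3) (Fin 3) (Rpoly F d),
      slHom F d M.trace = ((slHom F d).mapMatrix M).trace := by
    intro M; simp [Matrix.trace]
  rw [htr]
  simp only [_root_.map_mul, map_pow, map_sub, h1, h1t]
end
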